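/- Let (Ω, 𝒜, μ) be a measure space, p ∈ [1,∞), T a positive C₀-semigroup on L_p(μ) with generator A, and V : Ω → [0,∞] locally measurable (not assumed T-admissible). Then (T_V)_{−V}(t) = s-lim_{ε→0+} T_{εV}(t) for every t > 0. -/

import Mathlib

open MeasureTheory Filter Topology ENNReal

noncomputable section

namespace Absorption

variable {E : Type*} [NormedAddCommGroup E] [NormedSpace ℝ E]

/-- A one-parameter semigroup of bounded operators (for nonnegative times). -/
def IsSemigroup (T : ℝ → E →L[ℝ] E) : Prop :=
  T 0 = ContinuousLinearMap.id ℝ E ∧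
    ∀ s t : ℝ, 0 ≤ s → 0 ≤ t → T (s + t) = (T s).comp (T t)

/-- A `C₀`-semigroup: a one-parameter semigroup which is strongly continuous on `[0, ∞)`. -/
def IsC0Semigroup (T : ℝ → E →L[ℝ] E) : Prop :=
  IsSemigroup T ∧ ∀ f : E, ContinuousOn (fun t => T t f) (Set.Ici (0 : ℝ))

/-- `(f, g)` belongs to the graph of the generator of the semigroup `T`. -/
def InGenerator (T : ℝ → E →L[ℝ] E) (f g : E) : Prop :=
  Tendsto (fun t : ℝ => t⁻¹ • (T t f - f)) (𝓝[>] (0 : ℝ)) (𝓝 g)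

variable {Ω : Type*} [MeasurableSpace Ω]

/-- A function into a measurable space is *locally measurable* (w.r.t. `μ`) if on every set of
finite measure it coincides a.e. with a measurable function. -/
def LocallyMeasurable {α : Type*} [MeasurableSpace α] (μ : Measure Ω) (V : Ω → α) : Prop :=
  ∀ B : Set Ω, MeasurableSet B → μ B < ∞ →
    ∃ g : Ω → α, Measurable g ∧ ∀ᵐ ω ∂(μ.restrict B), V ω = g ω

/-- A set is a local `μ`-null set if its intersection with every measurable set of finite
measure is null. -/
def IsLocalNullSet (μ : Measure Ω) (N : Set Ω) : Prop :=
  ∀ B : Set Ω, MeasurableSet B → μ B < ∞ → μ (N ∩ B) = 0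

/-- Positivity of a family of operators on `L_p` (for positive times). -/
def IsPositiveSG {p : ℝ≥0∞} {μ : Measure Ω} [Fact (1 ≤ p)]
    (T : ℝ → Lp ℝ p μ →L[ℝ] Lp ℝ p μ) : Prop :=
  ∀ t : ℝ, 0 ≤ t → ∀ f : Lp ℝ p μ, 0 ≤ f → 0 ≤ T t f

/-- A band projection on the Banach lattice `L_p(μ)`: an idempotent operator `P`
with `0 ≤ P f ≤ f` for all `f ≥ 0`. -/
def IsBandProjection {p : ℝ≥0∞} {μ : Measure Ω} [Fact (1 ≤ p)]
    (P : Lp ℝ p μ →L[ℝ] Lp ℝ p μ) : Prop :=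
  P.comp P = P ∧ ∀ f : Lp ℝ p μ, 0 ≤ f → 0 ≤ P f ∧ P f ≤ f

/-- `S = (e^{t(A−W)})_{t ≥ 0}`: `S` is the `C₀`-semigroup whose generator is `A - W`,
where `A` is the generator of `T` and the bounded function `W` acts by multiplication. -/
def IsPerturbedSG (μ : Measure Ω) (p : ℝ≥0∞) [Fact (1 ≤ p)]
    (T S : ℝ → Lp ℝ p μ →L[ℝ] Lp ℝ p μ) (W : Ω → ℝ) : Prop :=
  IsC0Semigroup S ∧
    ∀ f g : Lp ℝ p μ, InGenerator S f g ↔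
      ∃ g₀ : Lp ℝ p μ, InGenerator T f g₀ ∧
        ⇑g =ᵐ[μ] fun ω => g₀ ω - W ω * f ω

/-- Same as `IsPerturbedSG`, for semigroups acting on a subspace `F` of `L_p(μ)`. -/
def IsPerturbedSGSub (μ : Measure Ω) (p : ℝ≥0∞) [Fact (1 ≤ p)] (F : Submodule ℝ (Lp ℝ p μ))
    (T S : ℝ → F →L[ℝ] F) (W : Ω → ℝ) : Prop :=
  IsC0Semigroup S ∧
    ∀ f g : F, InGenerator S f g ↔
      ∃ g₀ : F, InGenerator T f g₀ ∧
        ⇑(g : Lp ℝ p μ) =ᵐ[μ] fun ω => (g₀ : Lp ℝ p μ) ω - W ω * (f : Lp ℝ p μ) ω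

/-- The truncation `V ∧ n` of `V : Ω → [0,∞]`, as a real-valued function. -/
def trunc (V : Ω → ℝ≥0∞) (n : ℕ) : Ω → ℝ := fun ω => (min (V ω) (n : ℝ≥0∞)).toReal

/-- The scalar multiple `ε V` of an absorption rate `V : Ω → [0,∞]`. -/
def smulRate (ε : ℝ) (V : Ω → ℝ≥0∞) : Ω → ℝ≥0∞ := fun ω => ENNReal.ofReal ε * V ω

/-- The absorption rate `V - V ∧ n` (with value `∞` wherever `V = ∞`). -/
def resid (V : Ω → ℝ≥0∞) (n : ℕ) : Ω → ℝ≥0∞ := fun ω => V ω - min (V ω) (n : ℝ≥0∞)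

/-- `TV` is the absorption semigroup `T_V` associated with the rate `V : Ω → [0,∞]`, i.e.
the strong limit `T_V(t) = s-lim_{n→∞} e^{t(A - V∧n)}` (for `t ≥ 0`). -/
def IsAbsorptionSG (μ : Measure Ω) (p : ℝ≥0∞) [Fact (1 ≤ p)]
    (T : ℝ → Lp ℝ p μ →L[ℝ] Lp ℝ p μ) (V : Ω → ℝ≥0∞)
    (TV : ℝ → Lp ℝ p μ →L[ℝ] Lp ℝ p μ) : Prop :=
  ∃ S : ℕ → ℝ → Lp ℝ p μ →L[ℝ] Lp ℝ p μ,
    (∀ n, IsPerturbedSG μ p T (S n) (trunc V n)) ∧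
    ∀ t : ℝ, 0 ≤ t → ∀ f, Tendsto (fun n => S n t f) atTop (𝓝 (TV t f))

/-- `V : Ω → [0,∞]` is `T`-admissible: `V` is locally measurable, the strong limits
`T_V(t) = s-lim_{n→∞} e^{t(A - V∧n)}` exist, and `T_V` is a `C₀`-semigroup. -/
def Admissible (μ : Measure Ω) (p : ℝ≥0∞) [Fact (1 ≤ p)]
    (T : ℝ → Lp ℝ p μ →L[ℝ] Lp ℝ p μ) (V : Ω → ℝ≥0∞) : Prop :=
  LocallyMeasurable μ V ∧
  ∃ TV, IsAbsorptionSG μ p T V TV ∧ IsC0Semigroup TV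

/-- The truncation `(V ∧ n) ∨ (−n)` of an extended-real-valued rate, as a real function. -/
def truncE (V : Ω → EReal) (n : ℕ) : Ω → ℝ :=
  fun ω => (max (min (V ω) (n : EReal)) (-(n : EReal))).toReal

/-- `TV` is the absorption semigroup `T_V` of an extended-real-valued rate `V`:
`T_V(t) = s-lim_{n→∞} e^{t(A - (V∧n)∨(−n))}` (for `t ≥ 0`). -/
def IsAbsorptionSGE (μ : Measure Ω) (p : ℝ≥0∞) [Fact (1 ≤ p)]
    (T : ℝ → Lp ℝ p μ →L[ℝ] Lp ℝ p μ) (V : Ω → EReal)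
    (TV : ℝ → Lp ℝ p μ →L[ℝ] Lp ℝ p μ) : Prop :=
  ∃ S : ℕ → ℝ → Lp ℝ p μ →L[ℝ] Lp ℝ p μ,
    (∀ n, IsPerturbedSG μ p T (S n) (truncE V n)) ∧
    ∀ t : ℝ, 0 ≤ t → ∀ f, Tendsto (fun n => S n t f) atTop (𝓝 (TV t f))

/-- `T`-admissibility for an extended-real-valued absorption rate `V`. -/
def AdmissibleE (μ : Measure Ω) (p : ℝ≥0∞) [Fact (1 ≤ p)]
    (T : ℝ → Lp ℝ p μ →L[ℝ] Lp ℝ p μ) (V : Ω → EReal) : Prop :=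
  LocallyMeasurable μ V ∧
  ∃ TV, IsAbsorptionSGE μ p T V TV ∧ IsC0Semigroup TV

end Absorption

open Absorption

/-!
If `S t = e^{tA}`, then `e^{t(A + B)} f` is the sum `dyson S B f t` of the Dyson–Phillips series.
Write `S_k(t) = e^{t(A - V ∧ k)}`, let `f ≥ 0`, and put `L = (T_V)_{-V}(t) P f`.

* As `k → ∞`, the series of `S_k` perturbed by `V ∧ n` converge to `(T_V)_{-V ∧ n}(t) P f`. Here
  `T_V(s) = T_V(s) P` for `s > 0`, and `s = 0` is negligible in the Duhamel integrals.
  As `n → ∞`, these limits tend to `L`.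
* Lower bound: for `k ≥ n + m` one has `V ∧ n + εV ∧ m ≤ V ∧ k + εn`, so the perturbed series is at
  most `e^{εnt} e^{t(A - εV ∧ m)} f`. Let `k → ∞`, `m → ∞`, `ε → 0` and `n → ∞`, in this order.
* Upper bound: `B ↦ e^{t(A + B)} f` is convex along `0 ≤ B₁ ≤ B₂`. The perturbation
  `(1 - ε) (V ∧ k)` is the combination of `(ε⁻¹ - 1) (εV ∧ m)` and `V ∧ k - εV ∧ m` with weights
  `ε` and `1 - ε`. In the limit this gives `T_{εV}(t) f ≤ ε L + (1 - ε) T_{εV}(t) f`, that is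
  `T_{εV}(t) f ≤ L`.
-/

namespace Absorption

open Set

section BanachSpace

variable {E : Type*} [NormedAddCommGroup E] [NormedSpace ℝ E]
variable {S Z : ℝ → E →L[ℝ] E} {B : E →L[ℝ] E} {f g : E} {x y : ℝ → E} {t τ M : ℝ}

theorem IsSemigroup.zero_apply (hS : IsSemigroup S) (f : E) : S 0 f = f := by
  rw [hS.1, ContinuousLinearMap.id_apply]

theorem IsSemigroup.apply_apply (hS : IsSemigroup S) {s t : ℝ} (hs : 0 ≤ s) (ht : 0 ≤ t) (f : E) :
    S s (S t f) = S (s + t) f := by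
  rw [hS.2 s t hs ht, ContinuousLinearMap.comp_apply]

theorem IsSemigroup.apply_comm (hS : IsSemigroup S) {s t : ℝ} (hs : 0 ≤ s) (ht : 0 ≤ t) (f : E) :
    S s (S t f) = S t (S s f) := by
  rw [hS.apply_apply hs ht, hS.apply_apply ht hs, add_comm]

/-- Strong continuity on `[0, ∞)` of a family of bounded operators, without the semigroup law. -/
def IsStronglyContinuous (S : ℝ → E →L[ℝ] E) : Prop :=
  ∀ f : E, ContinuousOn (fun t => S t f) (Ici (0 : ℝ))

theorem IsC0Semigroup.isStronglyContinuous (hS : IsC0Semigroup S) : IsStronglyContinuous S :=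
  hS.2

namespace IsStronglyContinuous

theorem exists_norm_le [CompleteSpace E] (hS : IsStronglyContinuous S) (τ : ℝ) :
    ∃ M, ∀ t ∈ Icc 0 τ, ‖S t‖ ≤ M := by
  obtain ⟨M, hM⟩ := banach_steinhaus (g := fun t : Icc (0 : ℝ) τ => S t) fun f => by
    obtain ⟨C, hC⟩ := isCompact_Icc.exists_bound_of_continuousOn
      ((hS f).mono fun s (hs : s ∈ Icc 0 τ) => hs.1)
    exact ⟨C, fun t => hC t t.2⟩
  exact ⟨M, fun t ht => hM ⟨t, ht⟩⟩

theorem continuousOn_uncurry [CompleteSpace E] (hS : IsStronglyContinuous S) :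
    ContinuousOn (fun q : ℝ × E => S q.1 q.2) (Ici 0 ×ˢ univ) := by
  rintro ⟨t, f⟩ ⟨ht, -⟩
  obtain ⟨M, hM⟩ := hS.exists_norm_le (t + 1)
  have hcont : ContinuousOn (fun q : ℝ × E => S q.1 q.2) (Icc 0 (t + 1) ×ˢ univ) :=
    continuousOn_prod_of_continuousOn_lipschitzOnWith' _ M.toNNReal
      (fun s hs => (((S s).lipschitz.weaken
        (NNReal.le_toNNReal_of_coe_le (hM s hs))).lipschitzOnWith))
      (fun f _ => (hS f).mono Icc_subset_Ici_self)
  have hmem : Icc 0 (t + 1) ×ˢ univ ∈ 𝓝[Ici 0 ×ˢ univ] (t, f) := by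
    rw [nhdsWithin_prod_eq]
    refine prod_mem_prod ?_ univ_mem
    exact mem_nhdsWithin.2 ⟨Iio (t + 1), isOpen_Iio, by simp, fun s hs => ⟨hs.2, hs.1.le⟩⟩
  exact (hcont (t, f) ⟨⟨ht, by simp⟩, mem_univ f⟩).mono_of_mem_nhdsWithin hmem

end IsStronglyContinuous

/-- The convolution `∫₀ᵗ S(t - s) x(s) ds` appearing in Duhamel's formula. -/
def duhamel (S : ℝ → E →L[ℝ] E) (x : ℝ → E) (t : ℝ) : E :=
  ∫ s in (0 : ℝ)..t, S (t - s) (x s)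

theorem continuousOn_duhamel_integrand [CompleteSpace E] (hS : IsStronglyContinuous S)
    (hx : ContinuousOn x (Ici 0)) : ContinuousOn (fun s => S (t - s) (x s)) (Icc 0 t) :=
  hS.continuousOn_uncurry.comp (f := fun s => (t - s, x s))
    ((by fun_prop : ContinuousOn (fun s => t - s) _).prodMk (hx.mono Icc_subset_Ici_self))
    fun _ hs => ⟨sub_nonneg.2 hs.2, mem_univ _⟩

theorem intervalIntegrable_duhamel_integrand [CompleteSpace E] (hS : IsStronglyContinuous S)
    (hx : ContinuousOn x (Ici 0)) (ht : 0 ≤ t) :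
    IntervalIntegrable (fun s => S (t - s) (x s)) volume 0 t :=
  (continuousOn_duhamel_integrand hS hx).intervalIntegrable_of_Icc ht

theorem continuousOn_duhamel [CompleteSpace E] (hS : IsStronglyContinuous S)
    (hx : ContinuousOn x (Ici 0)) : ContinuousOn (duhamel S x) (Ici 0) := by
  have hx' : Continuous fun q : ℝ × ℝ => x (max q.2 0) :=
    hx.comp_continuous (by fun_prop) fun q => le_max_right q.2 0
  have hc : Continuous fun q : ℝ × ℝ => S (max (q.1 - q.2) 0) (x (max q.2 0)) :=
    hS.continuousOn_uncurry.comp_continuous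
      (f := fun q : ℝ × ℝ => (max (q.1 - q.2) 0, x (max q.2 0)))
      ((by fun_prop : Continuous fun q : ℝ × ℝ => max (q.1 - q.2) 0).prodMk hx')
      fun q => ⟨le_max_right (q.1 - q.2) 0, mem_univ _⟩
  refine (intervalIntegral.continuous_parametric_intervalIntegral_of_continuous (a₀ := 0)
    (f := fun t s => S (max (t - s) 0) (x (max s 0))) hc continuous_id).continuousOn.congr
    fun t ht => intervalIntegral.integral_congr fun s hs => ?_
  rw [uIcc_of_le ht] at hs
  simp only [max_eq_left hs.1, max_eq_left (sub_nonneg.2 hs.2)]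

theorem duhamel_sub [CompleteSpace E] (hS : IsStronglyContinuous S)
    (hx : ContinuousOn x (Ici 0)) (hy : ContinuousOn y (Ici 0)) (ht : 0 ≤ t) :
    duhamel S (fun s => x s - y s) t = duhamel S x t - duhamel S y t := by
  simp only [duhamel, map_sub]
  exact intervalIntegral.integral_sub (intervalIntegrable_duhamel_integrand hS hx ht)
    (intervalIntegrable_duhamel_integrand hS hy ht)

theorem duhamel_add [CompleteSpace E] (hS : IsStronglyContinuous S)
    (hx : ContinuousOn x (Ici 0)) (hy : ContinuousOn y (Ici 0)) (ht : 0 ≤ t) :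
    duhamel S (fun s => x s + y s) t = duhamel S x t + duhamel S y t := by
  simp only [duhamel, map_add]
  exact intervalIntegral.integral_add (intervalIntegrable_duhamel_integrand hS hx ht)
    (intervalIntegrable_duhamel_integrand hS hy ht)

theorem duhamel_smul (c : ℝ) (x : ℝ → E) (t : ℝ) :
    duhamel S (fun s => c • x s) t = c • duhamel S x t := by
  simp only [duhamel, map_smul, intervalIntegral.integral_smul]

theorem duhamel_sum [CompleteSpace E] (hS : IsStronglyContinuous S) {ι : Type*} (I : Finset ι)
    {x : ι → ℝ → E} (hx : ∀ i, ContinuousOn (x i) (Ici 0)) (ht : 0 ≤ t) :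
    duhamel S (fun s => ∑ i ∈ I, x i s) t = ∑ i ∈ I, duhamel S (x i) t := by
  simp only [duhamel, map_sum]
  exact intervalIntegral.integral_finsetSum fun i _ =>
    intervalIntegrable_duhamel_integrand hS (hx i) ht

theorem norm_duhamel_integrand_le (hM : ∀ s ∈ Icc 0 τ, ‖S s‖ ≤ M) {K : ℝ} (ht : t ≤ τ)
    {s : ℝ} (hs : s ∈ Icc 0 t) (hx : ‖x s‖ ≤ K) : ‖S (t - s) (x s)‖ ≤ M * K :=
  have hMs : ‖S (t - s)‖ ≤ M := hM _ ⟨sub_nonneg.2 hs.2, by linarith [hs.1]⟩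
  ((S (t - s)).le_opNorm _).trans
    (mul_le_mul hMs hx (norm_nonneg _) ((norm_nonneg _).trans hMs))

theorem integral_pow_div_factorial (a t : ℝ) (N : ℕ) :
    ∫ s in (0 : ℝ)..t, a * ((a * s) ^ N / N.factorial) =
      (a * t) ^ (N + 1) / (N + 1).factorial := by
  calc ∫ s in (0 : ℝ)..t, a * ((a * s) ^ N / N.factorial)
      = ∫ s in (0 : ℝ)..t, a ^ (N + 1) / N.factorial * s ^ N := by
        congr 1 with s
        ring
    _ = a ^ (N + 1) / N.factorial * ((t ^ (N + 1) - 0 ^ (N + 1)) / (N + 1)) := by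
        rw [intervalIntegral.integral_const_mul, integral_pow]
    _ = (a * t) ^ (N + 1) / (N + 1).factorial := by
        rw [Nat.factorial_succ, zero_pow N.succ_ne_zero]
        push_cast
        field_simp
        ring

theorem norm_le_of_iterate_duhamel (hM : ∀ s ∈ Icc 0 τ, ‖S s‖ ≤ M) {K : ℝ} {x : ℕ → ℝ → E}
    (hx : ∀ N, ∀ t ∈ Icc 0 τ, x (N + 1) t = duhamel S (fun s => B (x N s)) t)
    (hx0 : ∀ t ∈ Icc 0 τ, ‖x 0 t‖ ≤ K) (N : ℕ) :
    ∀ t ∈ Icc 0 τ, ‖x N t‖ ≤ K * ((M * ‖B‖ * t) ^ N / N.factorial) := by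
  induction N with
  | zero => simpa using hx0
  | succ N ih =>
    intro t ht
    have hbound : ∀ s ∈ Icc 0 t, ‖S (t - s) (B (x N s))‖ ≤
        K * (M * ‖B‖ * ((M * ‖B‖ * s) ^ N / N.factorial)) := fun s hs =>
      calc ‖S (t - s) (B (x N s))‖
          ≤ M * (‖B‖ * (K * ((M * ‖B‖ * s) ^ N / N.factorial))) :=
            norm_duhamel_integrand_le (x := fun s => B (x N s)) hM ht.2 hs
              (B.le_opNorm_of_le (ih s ⟨hs.1, hs.2.trans ht.2⟩))
        _ = K * (M * ‖B‖ * ((M * ‖B‖ * s) ^ N / N.factorial)) := by ring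
    rw [hx N t ht, ← integral_pow_div_factorial, ← intervalIntegral.integral_const_mul]
    exact intervalIntegral.norm_integral_le_of_norm_le ht.1
      (ae_of_all _ fun s hs => hbound s (Ioc_subset_Icc_self hs))
      (Continuous.intervalIntegrable (by fun_prop) _ _)

theorem tendsto_apply_of_norm_le {F : Type*} [NormedAddCommGroup F] [NormedSpace ℝ F] {ι : Type*}
    {l : Filter ι} {T : ι → E →L[ℝ] F} {x : ι → E} {z : E} {w : F} {M : ℝ}
    (hM : ∀ k, ‖T k‖ ≤ M) (hT : Tendsto (fun k => T k z) l (𝓝 w)) (hx : Tendsto x l (𝓝 z)) :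
    Tendsto (fun k => T k (x k)) l (𝓝 w) := by
  have hlim : Tendsto (fun k => M * ‖x k - z‖) l (𝓝 0) := by
    simpa using (tendsto_iff_norm_sub_tendsto_zero.1 hx).const_mul M
  have hdiff : Tendsto (fun k => T k (x k - z)) l (𝓝 0) :=
    squeeze_zero_norm (fun k => (T k).le_of_opNorm_le (hM k) _) hlim
  simpa [map_sub] using hT.add hdiff

/-- The terms of the Dyson–Phillips series of `e^{t(A + B)} f`, where `S` stands for
`e^{tA}`. -/
def dysonTerm (S : ℝ → E →L[ℝ] E) (B : E →L[ℝ] E) (f : E) : ℕ → ℝ → E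
  | 0 => fun t => S t f
  | N + 1 => duhamel S fun s => B (dysonTerm S B f N s)

/-- The sum of the Dyson–Phillips series: `e^{t(A + B)} f`, where `S` stands for `e^{tA}`. -/
def dyson (S : ℝ → E →L[ℝ] E) (B : E →L[ℝ] E) (f : E) (t : ℝ) : E :=
  ∑' N, dysonTerm S B f N t

theorem norm_dysonTerm_le (hM : ∀ s ∈ Icc 0 τ, ‖S s‖ ≤ M) (N : ℕ) (ht : t ∈ Icc 0 τ) :
    ‖dysonTerm S B f N t‖ ≤ M * ‖f‖ * ((M * ‖B‖ * t) ^ N / N.factorial) :=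
  norm_le_of_iterate_duhamel hM (x := dysonTerm S B f) (fun _ _ _ => rfl)
    (fun s hs => (S s).le_of_opNorm_le (hM s hs) f) N t ht

theorem norm_dysonTerm_le_of_le (hM : ∀ s ∈ Icc 0 τ, ‖S s‖ ≤ M) (N : ℕ) (ht : t ∈ Icc 0 τ) :
    ‖dysonTerm S B f N t‖ ≤ M * ‖f‖ * ((M * ‖B‖ * τ) ^ N / N.factorial) := by
  have hM0 : 0 ≤ M := (norm_nonneg _).trans (hM t ht)
  have := ht.1
  refine (norm_dysonTerm_le hM N ht).trans ?_
  gcongr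
  exact ht.2

theorem summable_dysonBound (K a : ℝ) :
    Summable fun N : ℕ => K * (a ^ N / N.factorial) :=
  (Real.summable_pow_div_factorial a).mul_left K

variable [CompleteSpace E]

theorem continuousOn_dysonTerm (hS : IsStronglyContinuous S) (B : E →L[ℝ] E) (f : E) (N : ℕ) :
    ContinuousOn (dysonTerm S B f N) (Ici 0) := by
  induction N with
  | zero => exact hS f
  | succ N ih => exact continuousOn_duhamel hS (B.continuous.comp_continuousOn ih)

theorem hasSum_dysonTerm (hS : IsStronglyContinuous S) (B : E →L[ℝ] E) (f : E) (ht : 0 ≤ t) :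
    HasSum (fun N => dysonTerm S B f N t) (dyson S B f t) := by
  obtain ⟨M, hM⟩ := hS.exists_norm_le t
  exact (Summable.of_norm_bounded (summable_dysonBound _ _)
    fun N => norm_dysonTerm_le hM N ⟨ht, le_rfl⟩).hasSum

theorem continuousOn_dyson (hS : IsStronglyContinuous S) (B : E →L[ℝ] E) (f : E) :
    ContinuousOn (dyson S B f) (Ici 0) := by
  intro t ht
  obtain ⟨M, hM⟩ := hS.exists_norm_le (t + 1)
  have hcont : ContinuousOn (dyson S B f) (Icc 0 (t + 1)) :=
    continuousOn_tsum (fun N => (continuousOn_dysonTerm hS B f N).mono Icc_subset_Ici_self)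
      (summable_dysonBound _ _) fun N s hs => norm_dysonTerm_le_of_le hM N hs
  exact (hcont t ⟨ht, by simp⟩).mono_of_mem_nhdsWithin
    (mem_nhdsWithin.2 ⟨Iio (t + 1), isOpen_Iio, by simp, fun s hs => ⟨hs.2, hs.1.le⟩⟩)

theorem sum_dysonTerm_succ (hS : IsStronglyContinuous S) (B : E →L[ℝ] E) (f : E) (n : ℕ)
    (ht : 0 ≤ t) :
    ∑ N ∈ Finset.range (n + 1), dysonTerm S B f N t =
      S t f + duhamel S (fun s => B (∑ N ∈ Finset.range n, dysonTerm S B f N s)) t := by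
  have hterm : ∀ N, ContinuousOn (fun s => B (dysonTerm S B f N s)) (Ici 0) := fun N =>
    B.continuous.comp_continuousOn (continuousOn_dysonTerm hS B f N)
  simp only [map_sum]
  rw [duhamel_sum hS _ hterm ht, Finset.sum_range_succ', add_comm]
  rfl

theorem dyson_eq (hS : IsStronglyContinuous S) (B : E →L[ℝ] E) (f : E) (ht : 0 ≤ t) :
    dyson S B f t = S t f + duhamel S (fun s => B (dyson S B f s)) t := by
  obtain ⟨M, hM⟩ := hS.exists_norm_le t
  have hterm : ∀ N, ContinuousOn (fun s => B (dysonTerm S B f N s)) (Ici 0) := fun N =>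
    B.continuous.comp_continuousOn (continuousOn_dysonTerm hS B f N)
  have hsum : HasSum (fun N => dysonTerm S B f (N + 1) t)
      (duhamel S (fun s => B (dyson S B f s)) t) := by
    refine intervalIntegral.hasSum_integral_of_dominated_convergence
      (fun N _ => M * (‖B‖ * (M * ‖f‖ * ((M * ‖B‖ * t) ^ N / N.factorial))))
      (fun N => (intervalIntegrable_duhamel_integrand hS (hterm N) ht).def'.aestronglyMeasurable)
      (fun N => ae_of_all _ fun s hs => ?_)
      (ae_of_all _ fun _ _ => ((summable_dysonBound _ _).mul_left _).mul_left _)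
      intervalIntegrable_const (ae_of_all _ fun s hs => ?_)
    all_goals rw [uIoc_of_le ht] at hs
    · exact norm_duhamel_integrand_le (x := fun s => B (dysonTerm S B f N s)) hM le_rfl
        (Ioc_subset_Icc_self hs)
        (B.le_opNorm_of_le (norm_dysonTerm_le_of_le hM N (Ioc_subset_Icc_self hs)))
    · exact ((hasSum_dysonTerm hS B f hs.1.le).mapL B).mapL (S (t - s))
  rw [dyson, (hasSum_dysonTerm hS B f ht).summable.tsum_eq_zero_add, hsum.tsum_eq]
  rfl

theorem eqOn_zero_of_eq_duhamel (hS : IsStronglyContinuous S) (hx : ContinuousOn x (Ici 0))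
    (hxS : ∀ t, 0 ≤ t → x t = duhamel S (fun s => B (x s)) t) : EqOn x 0 (Ici 0) := by
  intro t ht
  obtain ⟨M, hM⟩ := hS.exists_norm_le t
  obtain ⟨K, hK⟩ := isCompact_Icc.exists_bound_of_continuousOn
    (hx.mono fun s (hs : s ∈ Icc 0 t) => hs.1)
  have hbound : ∀ N : ℕ, ‖x t‖ ≤ K * ((M * ‖B‖ * t) ^ N / N.factorial) := fun N =>
    norm_le_of_iterate_duhamel (x := fun _ => x) hM (fun _ s hs => hxS s hs.1) hK N t ⟨ht, le_rfl⟩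
  have hlim := (FloorSemiring.tendsto_pow_div_factorial_atTop (M * ‖B‖ * t)).const_mul K
  rw [mul_zero] at hlim
  exact norm_le_zero_iff.1 (ge_of_tendsto' hlim hbound)

theorem eq_dyson_of_eq_add_duhamel (hS : IsStronglyContinuous S) (hx : ContinuousOn x (Ici 0))
    (hxS : ∀ t, 0 ≤ t → x t = S t f + duhamel S (fun s => B (x s)) t) (ht : 0 ≤ t) :
    x t = dyson S B f t := by
  have hd := continuousOn_dyson hS B f
  have hBx : ContinuousOn (fun s => B (x s)) (Ici 0) := B.continuous.comp_continuousOn hx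
  have hBd : ContinuousOn (fun s => B (dyson S B f s)) (Ici 0) :=
    B.continuous.comp_continuousOn hd
  refine sub_eq_zero.1 (eqOn_zero_of_eq_duhamel (x := fun s => x s - dyson S B f s) (B := B)
    hS (hx.sub hd) (fun t ht => ?_) ht)
  simp only [map_sub]
  rw [duhamel_sub hS hBx hBd ht, hxS t ht, dyson_eq hS B f ht, add_sub_add_left_eq_sub]

section StrongLimits

variable {F : Type*} [NormedAddCommGroup F] [NormedSpace ℝ F]
variable {ι : Type*} {l : Filter ι}
variable [CompleteSpace F] [l.IsCountablyGenerated]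
variable {S : ι → ℝ → E →L[ℝ] E} {R : ℝ → F →L[ℝ] F} {J : F →L[ℝ] E} {M : ℝ}

theorem tendsto_duhamel {x : ι → ℝ → E} {y : ℝ → F} {K : ℝ}
    (hS : ∀ k, IsStronglyContinuous (S k)) (hx : ∀ k, ContinuousOn (x k) (Ici 0))
    (hR : IsStronglyContinuous R) (hy : ContinuousOn y (Ici 0)) (ht : 0 ≤ t)
    (hM : ∀ k, ∀ s ∈ Icc 0 t, ‖S k s‖ ≤ M) (hK : ∀ k, ∀ s ∈ Icc 0 t, ‖x k s‖ ≤ K)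
    (hSR : ∀ s, 0 ≤ s → ∀ z, Tendsto (fun k => S k s (J z)) l (𝓝 (J (R s z))))
    (hxy : ∀ s ∈ Ioc 0 t, Tendsto (fun k => x k s) l (𝓝 (J (y s)))) :
    Tendsto (fun k => duhamel (S k) (x k) t) l (𝓝 (J (duhamel R y t))) := by
  rw [duhamel, ← J.intervalIntegral_comp_comm (intervalIntegrable_duhamel_integrand hR hy ht)]
  refine intervalIntegral.tendsto_integral_filter_of_dominated_convergence (fun _ => M * K)
    (Eventually.of_forall fun k =>
      (intervalIntegrable_duhamel_integrand (hS k) (hx k) ht).def'.aestronglyMeasurable)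
    (Eventually.of_forall fun k => ae_of_all _ fun s hs => ?_)
    intervalIntegrable_const (ae_of_all _ fun s hs => ?_)
  all_goals rw [uIoc_of_le ht] at hs
  · have hs' := Ioc_subset_Icc_self hs
    exact norm_duhamel_integrand_le (hM k) le_rfl hs' (hK k s hs')
  · exact tendsto_apply_of_norm_le
      (fun k => hM k (t - s) ⟨sub_nonneg.2 hs.2, by linarith [hs.1]⟩)
      (hSR (t - s) (sub_nonneg.2 hs.2) (y s)) (hxy s hs)

theorem tendsto_dysonTerm {C : F →L[ℝ] F} {z : F} (hS : ∀ k, IsStronglyContinuous (S k))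
    (hR : IsStronglyContinuous R) (hM : ∀ k, ∀ s ∈ Icc 0 τ, ‖S k s‖ ≤ M)
    (hBC : ∀ w, B (J w) = J (C w))
    (hSR : ∀ s, 0 ≤ s → ∀ w, Tendsto (fun k => S k s (J w)) l (𝓝 (J (R s w))))
    (hf : ∀ s, 0 < s → Tendsto (fun k => S k s f) l (𝓝 (J (R s z)))) (N : ℕ) :
    ∀ t ∈ Ioc 0 τ,
      Tendsto (fun k => dysonTerm (S k) B f N t) l (𝓝 (J (dysonTerm R C z N t))) := by
  induction N with
  | zero => exact fun t ht => hf t ht.1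
  | succ N ih =>
    intro t ht
    refine tendsto_duhamel hS
      (fun k => B.continuous.comp_continuousOn (continuousOn_dysonTerm (hS k) B f N)) hR
      (C.continuous.comp_continuousOn (continuousOn_dysonTerm hR C z N)) ht.1.le
      (fun k s hs => hM k s ⟨hs.1, hs.2.trans ht.2⟩)
      (fun k s hs => B.le_opNorm_of_le
        (norm_dysonTerm_le_of_le (hM k) N ⟨hs.1, hs.2.trans ht.2⟩)) hSR fun s hs => ?_
    rw [← hBC]
    exact (B.continuous.tendsto _).comp (ih s ⟨hs.1, hs.2.trans ht.2⟩)

theorem tendsto_dyson {C : F →L[ℝ] F} {z : F} (hS : ∀ k, IsStronglyContinuous (S k))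
    (hR : IsStronglyContinuous R) (hM : ∀ k, ∀ s ∈ Icc 0 t, ‖S k s‖ ≤ M)
    (hBC : ∀ w, B (J w) = J (C w))
    (hSR : ∀ s, 0 ≤ s → ∀ w, Tendsto (fun k => S k s (J w)) l (𝓝 (J (R s w))))
    (hf : ∀ s, 0 < s → Tendsto (fun k => S k s f) l (𝓝 (J (R s z)))) (ht : 0 < t) :
    Tendsto (fun k => dyson (S k) B f t) l (𝓝 (J (dyson R C z t))) := by
  have htt : t ∈ Icc 0 t := ⟨ht.le, le_rfl⟩
  rw [← ((hasSum_dysonTerm hR C z ht.le).mapL J).tsum_eq]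
  exact tendsto_tsum_of_dominated_convergence (summable_dysonBound _ _)
    (fun N => tendsto_dysonTerm hS hR hM hBC hSR hf N t ⟨ht, le_rfl⟩)
    (Eventually.of_forall fun k N => norm_dysonTerm_le (hM k) N htt)

end StrongLimits

end BanachSpace

section Generators

variable {E : Type*} [NormedAddCommGroup E] [NormedSpace ℝ E]
variable {S Z : ℝ → E →L[ℝ] E} {B : E →L[ℝ] E} {f g : E} {t : ℝ}

theorem InGenerator.apply (hZ : IsSemigroup Z) (h : InGenerator Z f g) {s : ℝ} (hs : 0 ≤ s) :
    InGenerator Z (Z s f) (Z s g) := by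
  refine (((Z s).continuous.tendsto g).comp h).congr' ?_
  filter_upwards [self_mem_nhdsWithin] with r hr
  simp only [Function.comp_apply, map_smul, map_sub, hZ.apply_comm hs (mem_Ioi.1 hr).le]

theorem InGenerator.const_smul (h : InGenerator Z f g) (c : ℝ) :
    InGenerator Z (c • f) (c • g) :=
  (Tendsto.const_smul h c).congr fun r => by rw [map_smul, ← smul_sub, smul_comm]

theorem IsStronglyContinuous.tendsto_average [CompleteSpace E] (hZ : IsStronglyContinuous Z)
    (f : E) {h : ℝ} (hh : 0 ≤ h) :
    Tendsto (fun r => r⁻¹ • ∫ s in h..h + r, Z s f) (𝓝[>] 0) (𝓝 (Z h f)) := by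
  have hc : Continuous fun s => Z (max s 0) f :=
    (hZ f).comp_continuous (f := fun s => max s 0) (by fun_prop) fun s => le_max_right s 0
  have hslope := (hc.integral_hasStrictDerivAt h h).hasDerivAt.tendsto_slope_zero_right
  rw [max_eq_left hh] at hslope
  refine hslope.congr' ?_
  filter_upwards [self_mem_nhdsWithin] with r hr
  rw [intervalIntegral.integral_same, sub_zero]
  congr 1
  refine intervalIntegral.integral_congr fun s hs => ?_
  rw [uIcc_of_le (le_add_of_nonneg_right (mem_Ioi.1 hr).le)] at hs
  simp only [max_eq_left (hh.trans hs.1)]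

theorem IsC0Semigroup.inGenerator_integral [CompleteSpace E] (hZ : IsC0Semigroup Z) (f : E)
    {h : ℝ} (hh : 0 ≤ h) : InGenerator Z (∫ s in (0 : ℝ)..h, Z s f) (Z h f - f) := by
  have hint : ∀ {a b}, 0 ≤ a → 0 ≤ b → IntervalIntegrable (fun s => Z s f) volume a b :=
    fun ha hb => ((hZ.2 f).mono fun s hs => (le_min ha hb).trans hs.1).intervalIntegrable
  have hlim := (hZ.isStronglyContinuous.tendsto_average f hh).sub
    (hZ.isStronglyContinuous.tendsto_average f le_rfl)
  rw [hZ.1.zero_apply] at hlim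
  refine hlim.congr' ?_
  filter_upwards [self_mem_nhdsWithin] with r (hr : 0 < r)
  have hshift : Z r (∫ s in (0 : ℝ)..h, Z s f) = ∫ s in r..h + r, Z s f := by
    rw [← (Z r).intervalIntegral_comp_comm (hint le_rfl hh)]
    calc ∫ s in (0 : ℝ)..h, Z r (Z s f) = ∫ s in (0 : ℝ)..h, Z (s + r) f :=
          intervalIntegral.integral_congr fun s hs => by
            rw [uIcc_of_le hh] at hs
            simp only [hZ.1.apply_apply hr.le hs.1, add_comm r]
      _ = ∫ s in r..h + r, Z s f := by
          rw [intervalIntegral.integral_comp_add_right (fun s => Z s f), zero_add]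
  rw [hshift, zero_add, ← smul_sub, intervalIntegral.integral_interval_sub_interval_comm
    (hint hh (by positivity)) (hint le_rfl hr.le) (hint hh le_rfl),
    intervalIntegral.integral_symm 0 h, intervalIntegral.integral_symm r (h + r)]
  congr 1
  abel

theorem IsC0Semigroup.dense_generator_domain [CompleteSpace E] (hZ : IsC0Semigroup Z) :
    Dense {f | ∃ g, InGenerator Z f g} := by
  intro f
  have hlim := hZ.isStronglyContinuous.tendsto_average f le_rfl
  rw [hZ.1.zero_apply] at hlim
  refine mem_closure_of_tendsto hlim ?_
  filter_upwards [self_mem_nhdsWithin] with r (hr : 0 < r)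
  rw [zero_add]
  exact ⟨_, (hZ.inGenerator_integral f hr.le).const_smul r⁻¹⟩

/-- The generator of `Z` is contained in `A + B`, where `A` is the generator of `S`.
(By the uniqueness of the perturbed semigroup this inclusion already determines `Z`.) -/
structure IsPerturbation (S : ℝ → E →L[ℝ] E) (B : E →L[ℝ] E) (Z : ℝ → E →L[ℝ] E) : Prop where
  base : IsC0Semigroup S
  perturbed : IsC0Semigroup Z
  inGenerator : ∀ f g, InGenerator Z f g → InGenerator S f (g - B f)

/-- The semigroup `e^{ct} S(t)`, generated by `A + c` when `A` generates `S`. -/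
def rescale (c : ℝ) (S : ℝ → E →L[ℝ] E) (t : ℝ) : E →L[ℝ] E := Real.exp (c * t) • S t

theorem rescale_apply (c : ℝ) (S : ℝ → E →L[ℝ] E) (t : ℝ) (f : E) :
    rescale c S t f = Real.exp (c * t) • S t f := rfl

theorem IsC0Semigroup.rescale (hS : IsC0Semigroup S) (c : ℝ) : IsC0Semigroup (rescale c S) := by
  refine ⟨⟨?_, fun s t hs ht => ?_⟩, fun f => ?_⟩
  · rw [Absorption.rescale, mul_zero, Real.exp_zero, one_smul, hS.1.1]
  · ext1 f
    simp only [rescale_apply, ContinuousLinearMap.comp_apply, map_smul, smul_smul,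
      hS.1.apply_apply hs ht, mul_add, Real.exp_add]
    rw [mul_comm (Real.exp (c * s))]
  · exact (by fun_prop : Continuous fun t => Real.exp (c * t)).continuousOn.smul (hS.2 f)

theorem InGenerator.of_rescale {c : ℝ} (h : InGenerator (rescale c S) f g) :
    InGenerator S f (g - c • f) := by
  have hexp : Tendsto (fun t : ℝ => Real.exp (-c * t)) (𝓝[>] 0) (𝓝 1) := by
    have hcont : Continuous fun t : ℝ => Real.exp (-c * t) := by fun_prop
    simpa using (hcont.tendsto 0).mono_left nhdsWithin_le_nhds
  have hslope : Tendsto (fun t : ℝ => t⁻¹ * (Real.exp (-c * t) - 1)) (𝓝[>] 0) (𝓝 (-c)) := by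
    have hderiv : HasDerivAt (fun t : ℝ => Real.exp (-c * t)) (-c) 0 := by
      simpa using ((hasDerivAt_id (0 : ℝ)).const_mul (-c)).exp
    simpa using hderiv.tendsto_slope_zero_right
  have hlim := (hexp.smul h).add (hslope.smul_const f)
  rw [one_smul, neg_smul, ← sub_eq_add_neg] at hlim
  refine hlim.congr fun t => ?_
  have hcancel : Real.exp (-c * t) * Real.exp (c * t) = 1 := by
    rw [← Real.exp_add, neg_mul, neg_add_cancel, Real.exp_zero]
  calc Real.exp (-c * t) • t⁻¹ • (rescale c S t f - f) + (t⁻¹ * (Real.exp (-c * t) - 1)) • f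
      = t⁻¹ • ((Real.exp (-c * t) * Real.exp (c * t)) • S t f - f) := by
        rw [rescale_apply]
        module
    _ = t⁻¹ • (S t f - f) := by rw [hcancel, one_smul]

namespace IsPerturbation

theorem rescale (h : IsPerturbation S B Z) (c : ℝ) :
    IsPerturbation S (B + c • ContinuousLinearMap.id ℝ E) (rescale c Z) where
  base := h.base
  perturbed := h.perturbed.rescale c
  inGenerator f g hg := by
    have := h.inGenerator _ _ hg.of_rescale
    rwa [sub_sub, add_comm] at this

theorem hasDerivWithinAt [CompleteSpace E] (h : IsPerturbation S B Z) (hf : InGenerator Z f g)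
    {s : ℝ} (hs : 0 ≤ s) (hst : s < t) :
    HasDerivWithinAt (fun s => S (t - s) (Z s f)) (S (t - s) (B (Z s f))) (Ioi s) s := by
  rw [hasDerivWithinAt_iff_tendsto_slope' self_notMem_Ioi]
  have hZs := hf.apply h.perturbed.1 hs
  have hquot : Tendsto (fun r : ℝ => r⁻¹ • (Z r (Z s f) - Z s f) - r⁻¹ • (S r (Z s f) - Z s f))
      (𝓝[>] 0) (𝓝 (B (Z s f))) := by
    simpa using Tendsto.sub hZs (h.inGenerator _ _ hZs)
  have hshift : Tendsto (fun y : ℝ => y - s) (𝓝[>] s) (𝓝[>] 0) := by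
    refine tendsto_nhdsWithin_iff.2 ⟨?_, ?_⟩
    · have hcont : Continuous fun y : ℝ => y - s := by fun_prop
      simpa using (hcont.tendsto s).mono_left nhdsWithin_le_nhds
    · filter_upwards [self_mem_nhdsWithin] with y hy using sub_pos.2 (mem_Ioi.1 hy)
  have hpair : Tendsto (fun y : ℝ => (t - y, (y - s)⁻¹ • (Z (y - s) (Z s f) - Z s f) -
      (y - s)⁻¹ • (S (y - s) (Z s f) - Z s f))) (𝓝[>] s)
      (𝓝[Ici 0 ×ˢ univ] (t - s, B (Z s f))) := by
    refine tendsto_nhdsWithin_iff.2 ⟨Tendsto.prodMk_nhds ?_ (hquot.comp hshift), ?_⟩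
    · exact ((continuous_const.sub continuous_id).tendsto s).mono_left nhdsWithin_le_nhds
    · filter_upwards [Ioo_mem_nhdsGT hst] with y hy
      exact ⟨sub_nonneg.2 hy.2.le, mem_univ _⟩
  refine ((h.base.isStronglyContinuous.continuousOn_uncurry (t - s, B (Z s f))
    ⟨sub_nonneg.2 hst.le, mem_univ _⟩).tendsto.comp hpair).congr' ?_
  filter_upwards [Ioo_mem_nhdsGT hst] with y hy
  have hys : 0 ≤ y - s := (sub_pos.2 hy.1).le
  have hZy : Z (y - s) (Z s f) = Z y f := by
    rw [h.perturbed.1.apply_apply hys hs, sub_add_cancel]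
  have hSy : S (t - y) (S (y - s) (Z s f)) = S (t - s) (Z s f) := by
    rw [h.base.1.apply_apply (sub_pos.2 hy.2).le hys, sub_add_sub_cancel]
  simp only [Function.comp_apply, slope, vsub_eq_sub]
  rw [← smul_sub, sub_sub_sub_cancel_right, map_smul, map_sub, hSy, hZy]

variable [CompleteSpace E]

theorem eq_add_duhamel_of_inGenerator (h : IsPerturbation S B Z) (hf : InGenerator Z f g)
    (ht : 0 ≤ t) : Z t f = S t f + duhamel S (fun s => B (Z s f)) t := by
  have hS := h.base.isStronglyContinuous
  have hZ := h.perturbed.isStronglyContinuous f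
  have hBZ : ContinuousOn (fun s => B (Z s f)) (Ici 0) := B.continuous.comp_continuousOn hZ
  rw [duhamel, intervalIntegral.integral_eq_sub_of_hasDeriv_right_of_le ht
    (continuousOn_duhamel_integrand hS hZ) (fun s hs => h.hasDerivWithinAt hf hs.1.le hs.2)
    (intervalIntegrable_duhamel_integrand hS hBZ ht)]
  rw [sub_self, sub_zero, h.base.1.zero_apply, h.perturbed.1.zero_apply, add_sub_cancel]

theorem continuous_duhamel (h : IsPerturbation S B Z) (ht : 0 ≤ t) :
    Continuous fun f => duhamel S (fun s => B (Z s f)) t := by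
  have hS := h.base.isStronglyContinuous
  have hBZ : ∀ f, ContinuousOn (fun s => B (Z s f)) (Ici 0) := fun f =>
    B.continuous.comp_continuousOn (h.perturbed.2 f)
  obtain ⟨M, hM⟩ := hS.exists_norm_le t
  obtain ⟨K, hK⟩ := h.perturbed.isStronglyContinuous.exists_norm_le t
  refine continuous_of_linear_of_bound (𝕜 := ℝ) (C := M * (‖B‖ * K) * t) (fun f g => ?_)
    (fun c f => ?_) fun f => ?_
  · simp only [map_add, duhamel_add hS (hBZ f) (hBZ g) ht]
  · simp only [map_smul, duhamel_smul]
  · have hbound : ∀ s ∈ uIoc 0 t, ‖S (t - s) (B (Z s f))‖ ≤ M * (‖B‖ * (K * ‖f‖)) := by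
      intro s hs
      rw [uIoc_of_le ht] at hs
      have hs' := Ioc_subset_Icc_self hs
      exact norm_duhamel_integrand_le (x := fun s => B (Z s f)) hM le_rfl hs'
        (B.le_opNorm_of_le ((Z s).le_of_opNorm_le (hK s hs') f))
    refine (intervalIntegral.norm_integral_le_of_norm_le_const hbound).trans_eq ?_
    rw [sub_zero, abs_of_nonneg ht]
    ring

theorem eq_add_duhamel (h : IsPerturbation S B Z) (f : E) (ht : 0 ≤ t) :
    Z t f = S t f + duhamel S (fun s => B (Z s f)) t :=
  congrFun (Continuous.ext_on h.perturbed.dense_generator_domain (Z t).continuous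
    ((S t).continuous.add (h.continuous_duhamel ht))
    fun _ ⟨_, hg⟩ => h.eq_add_duhamel_of_inGenerator hg ht) f

theorem apply_eq_dyson (h : IsPerturbation S B Z) (f : E) (ht : 0 ≤ t) :
    Z t f = dyson S B f t :=
  eq_dyson_of_eq_add_duhamel h.base.isStronglyContinuous (h.perturbed.2 f)
    (fun _ ht => h.eq_add_duhamel f ht) ht

end IsPerturbation

end Generators

section OrderedBanachSpace

variable {E : Type*} [NormedAddCommGroup E] [NormedSpace ℝ E] [PartialOrder E]

/-- The order of operators: `A f ≤ B f` for all `f ≥ 0`. In particular `OperatorLE 0 B` says that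
`B` is a positive operator. -/
def OperatorLE (A B : E →L[ℝ] E) : Prop :=
  ∀ f, 0 ≤ f → A f ≤ B f

variable {S Z : ℝ → E →L[ℝ] E} {A B : E →L[ℝ] E} {f g : E} {x y : ℝ → E} {t : ℝ}

theorem OperatorLE.map_nonneg (h : OperatorLE 0 A) (hf : 0 ≤ f) : 0 ≤ A f := by
  simpa using h f hf

theorem operatorLE_zero_iff : OperatorLE 0 A ↔ ∀ f, 0 ≤ f → 0 ≤ A f :=
  ⟨fun h _ => h.map_nonneg, fun h f hf => by simpa using h f hf⟩

variable [IsOrderedAddMonoid E]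

theorem OperatorLE.map_mono (h : OperatorLE 0 A) (hfg : f ≤ g) : A f ≤ A g := by
  simpa [map_sub] using h.map_nonneg (sub_nonneg.2 hfg)

variable [IsOrderedModule ℝ E]

theorem smul_apply_add_le_of_operatorLE {a b : ℝ} (ha : 0 ≤ a) (hb : 0 ≤ b) (hab : a + b = 1)
    (hAB : OperatorLE A B) (hfg : f ≤ g) :
    a • A (a • f + b • g) + b • B (a • f + b • g) ≤ a • A f + b • B g := by
  have hdiff : A (g - f) ≤ B (g - f) := hAB _ (sub_nonneg.2 hfg)
  have hnonneg : 0 ≤ (a * b) • (B (g - f) - A (g - f)) :=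
    smul_nonneg (mul_nonneg ha hb) (sub_nonneg.2 hdiff)
  obtain rfl : a = 1 - b := eq_sub_of_add_eq hab
  rw [← sub_nonneg]
  convert hnonneg using 1
  simp only [map_add, map_sub, map_smul]
  module

variable [CompleteSpace E] [OrderClosedTopology E]

theorem duhamel_mono (hS : IsStronglyContinuous S) (hS0 : ∀ t, 0 ≤ t → OperatorLE 0 (S t))
    (hx : ContinuousOn x (Ici 0)) (hy : ContinuousOn y (Ici 0)) (ht : 0 ≤ t)
    (hxy : ∀ s ∈ Icc 0 t, x s ≤ y s) : duhamel S x t ≤ duhamel S y t := by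
  rw [duhamel, duhamel, intervalIntegral.integral_of_le ht, intervalIntegral.integral_of_le ht]
  refine setIntegral_mono_on (intervalIntegrable_duhamel_integrand hS hx ht).1
    (intervalIntegrable_duhamel_integrand hS hy ht).1 measurableSet_Ioc fun s hs => ?_
  exact (hS0 _ (sub_nonneg.2 hs.2)).map_mono (hxy s (Ioc_subset_Icc_self hs))

theorem duhamel_nonneg (hS : IsStronglyContinuous S) (hS0 : ∀ t, 0 ≤ t → OperatorLE 0 (S t))
    (hx : ContinuousOn x (Ici 0)) (ht : 0 ≤ t) (hx0 : ∀ s ∈ Icc 0 t, 0 ≤ x s) :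
    0 ≤ duhamel S x t := by
  have := duhamel_mono hS hS0 continuousOn_const hx ht hx0
  simpa [duhamel] using this

theorem dysonTerm_nonneg (hS : IsStronglyContinuous S) (hS0 : ∀ t, 0 ≤ t → OperatorLE 0 (S t))
    (hB : OperatorLE 0 B) (hf : 0 ≤ f) (N : ℕ) : ∀ t, 0 ≤ t → 0 ≤ dysonTerm S B f N t := by
  induction N with
  | zero => exact fun t ht => (hS0 t ht).map_nonneg hf
  | succ N ih =>
    exact fun t ht => duhamel_nonneg hS hS0
      (B.continuous.comp_continuousOn (continuousOn_dysonTerm hS B f N)) ht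
      fun s hs => hB.map_nonneg (ih s hs.1)

theorem dyson_nonneg (hS : IsStronglyContinuous S) (hS0 : ∀ t, 0 ≤ t → OperatorLE 0 (S t))
    (hB : OperatorLE 0 B) (hf : 0 ≤ f) (ht : 0 ≤ t) : 0 ≤ dyson S B f t :=
  (hasSum_dysonTerm hS B f ht).nonneg fun N => dysonTerm_nonneg hS hS0 hB hf N t ht

/-- A nonnegative supersolution `x` of the Duhamel equation `x = S f + S * (B x)`, which is solved
by `e^{t(A + B)} f` when `S t = e^{tA}`. It serves to bound this solution from above. -/
structure IsSupersolution (S : ℝ → E →L[ℝ] E) (B : E →L[ℝ] E) (f : E) (x : ℝ → E) : Prop where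
  continuousOn : ContinuousOn x (Ici 0)
  nonneg : ∀ t, 0 ≤ t → 0 ≤ x t
  add_duhamel_le : ∀ t, 0 ≤ t → S t f + duhamel S (fun s => B (x s)) t ≤ x t

theorem IsSupersolution.dyson_le (hx : IsSupersolution S B f x) (hS : IsStronglyContinuous S)
    (hS0 : ∀ t, 0 ≤ t → OperatorLE 0 (S t)) (hB : OperatorLE 0 B) (ht : 0 ≤ t) :
    dyson S B f t ≤ x t := by
  have hpartial : ∀ n, ∀ t, 0 ≤ t → ∑ N ∈ Finset.range n, dysonTerm S B f N t ≤ x t := by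
    intro n
    induction n with
    | zero => exact fun t ht => by simpa using hx.nonneg t ht
    | succ n ih =>
      intro t ht
      have hcont : ContinuousOn (fun s => B (∑ N ∈ Finset.range n, dysonTerm S B f N s)) (Ici 0) :=
        B.continuous.comp_continuousOn
          (continuousOn_finsetSum _ fun N _ => continuousOn_dysonTerm hS B f N)
      rw [sum_dysonTerm_succ hS B f n ht]
      refine le_trans (add_le_add_right ?_ _) (hx.add_duhamel_le t ht)
      exact duhamel_mono hS hS0 hcont (continuousOn_const.clm_apply hx.continuousOn) ht
        fun s hs => hB.map_mono (ih s hs.1)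
  exact le_of_tendsto' (hasSum_dysonTerm hS B f ht).tendsto_sum_nat fun n => hpartial n t ht

theorem dyson_mono (hS : IsStronglyContinuous S) (hS0 : ∀ t, 0 ≤ t → OperatorLE 0 (S t))
    (hA : OperatorLE 0 A) (hAB : OperatorLE A B) (hf : 0 ≤ f) (ht : 0 ≤ t) :
    dyson S A f t ≤ dyson S B f t := by
  have hB : OperatorLE 0 B := fun g hg => (hA g hg).trans (hAB g hg)
  have hcont := continuousOn_dyson hS B f
  refine IsSupersolution.dyson_le
    ⟨hcont, fun t ht => dyson_nonneg hS hS0 hB hf ht, fun t ht => ?_⟩ hS hS0 hA ht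
  rw [dyson_eq hS B f ht]
  refine add_le_add_right (duhamel_mono hS hS0 (A.continuous.comp_continuousOn hcont)
    (B.continuous.comp_continuousOn hcont) ht fun s hs => ?_) _
  exact hAB _ (dyson_nonneg hS hS0 hB hf hs.1)

theorem dyson_le_convex_combination {C : E →L[ℝ] E} {a b : ℝ} (hS : IsStronglyContinuous S)
    (hS0 : ∀ t, 0 ≤ t → OperatorLE 0 (S t)) (hA : OperatorLE 0 A) (hAB : OperatorLE A B)
    (hC0 : OperatorLE 0 C) (ha : 0 ≤ a) (hb : 0 ≤ b) (hab : a + b = 1)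
    (hC : OperatorLE C (a • A + b • B)) (hf : 0 ≤ f) (ht : 0 ≤ t) :
    dyson S C f t ≤ a • dyson S A f t + b • dyson S B f t := by
  have hB : OperatorLE 0 B := fun g hg => (hA g hg).trans (hAB g hg)
  have hcA := continuousOn_dyson hS A f
  have hcB := continuousOn_dyson hS B f
  have hcont := (hcA.const_smul a).add (hcB.const_smul b)
  have hnonneg : ∀ t, 0 ≤ t → 0 ≤ a • dyson S A f t + b • dyson S B f t := fun t ht =>
    add_nonneg (smul_nonneg ha (dyson_nonneg hS hS0 hA hf ht))
      (smul_nonneg hb (dyson_nonneg hS hS0 hB hf ht))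
  refine IsSupersolution.dyson_le (x := fun t => a • dyson S A f t + b • dyson S B f t)
    ⟨hcont, hnonneg, fun t ht => ?_⟩ hS hS0 hC0 ht
  have hcA' : ContinuousOn (fun s => a • A (dyson S A f s)) (Ici 0) :=
    (continuousOn_const.clm_apply hcA).const_smul a
  have hcB' : ContinuousOn (fun s => b • B (dyson S B f s)) (Ici 0) :=
    (continuousOn_const.clm_apply hcB).const_smul b
  calc S t f + duhamel S (fun s => C (a • dyson S A f s + b • dyson S B f s)) t
      ≤ S t f + duhamel S
          (fun s => a • A (dyson S A f s) + b • B (dyson S B f s)) t := by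
        refine add_le_add_right (duhamel_mono hS hS0 (C.continuous.comp_continuousOn hcont)
          (hcA'.add hcB') ht fun s hs => (hC _ (hnonneg s hs.1)).trans ?_) _
        exact smul_apply_add_le_of_operatorLE ha hb hab hAB (dyson_mono hS hS0 hA hAB hf hs.1)
    _ = a • (S t f + duhamel S (fun s => A (dyson S A f s)) t) +
          b • (S t f + duhamel S (fun s => B (dyson S B f s)) t) := by
        rw [duhamel_add hS hcA' hcB' ht, duhamel_smul, duhamel_smul, smul_add, smul_add,
          add_add_add_comm, ← add_smul, hab, one_smul]
    _ = a • dyson S A f t + b • dyson S B f t := by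
        rw [← dyson_eq hS A f ht, ← dyson_eq hS B f ht]

namespace IsPerturbation

theorem apply_nonneg (h : IsPerturbation S B Z) (hS0 : ∀ t, 0 ≤ t → OperatorLE 0 (S t)) {c : ℝ}
    (hB : OperatorLE 0 (B + c • ContinuousLinearMap.id ℝ E)) (ht : 0 ≤ t) :
    OperatorLE 0 (Z t) := by
  refine operatorLE_zero_iff.2 fun f hf => ?_
  have hdyson := dyson_nonneg h.base.isStronglyContinuous hS0 hB hf ht
  rw [← (h.rescale c).apply_eq_dyson f ht] at hdyson
  exact (smul_nonneg_iff_nonneg_of_pos_left (Real.exp_pos _)).1 hdyson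

theorem base_le (h : IsPerturbation S B Z) (hS0 : ∀ t, 0 ≤ t → OperatorLE 0 (S t))
    (hZ0 : ∀ t, 0 ≤ t → OperatorLE 0 (Z t)) (hB : OperatorLE 0 B) (ht : 0 ≤ t) :
    OperatorLE (S t) (Z t) := by
  intro f hf
  rw [h.eq_add_duhamel f ht]
  exact le_add_of_nonneg_right <| duhamel_nonneg h.base.isStronglyContinuous hS0
    (B.continuous.comp_continuousOn (h.perturbed.2 f)) ht
    fun s hs => hB.map_nonneg ((hZ0 s hs.1).map_nonneg hf)

theorem dyson_le_exp_smul (h : IsPerturbation S B Z) (hS0 : ∀ t, 0 ≤ t → OperatorLE 0 (S t))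
    (hA : OperatorLE 0 A) {c : ℝ} (hAB : OperatorLE A (B + c • ContinuousLinearMap.id ℝ E))
    (hf : 0 ≤ f) (ht : 0 ≤ t) : dyson S A f t ≤ Real.exp (c * t) • Z t f := by
  rw [← rescale_apply, (h.rescale c).apply_eq_dyson f ht]
  exact dyson_mono h.base.isStronglyContinuous hS0 hA hAB hf ht

end IsPerturbation

end OrderedBanachSpace

section BanachLattice

variable {E : Type*} [NormedAddCommGroup E] [Lattice E] [IsOrderedAddMonoid E]

theorem tendsto_apply_of_nonneg [NormedSpace ℝ E] {α : Type*} {l : Filter α} {A : α → E →L[ℝ] E}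
    {A₀ : E →L[ℝ] E} (hA : ∀ f, 0 ≤ f → Tendsto (fun a => A a f) l (𝓝 (A₀ f))) (f : E) :
    Tendsto (fun a => A a f) l (𝓝 (A₀ f)) := by
  rw [← posPart_sub_negPart f]
  simp only [map_sub]
  exact (hA _ (posPart_nonneg f)).sub (hA _ (negPart_nonneg f))

variable [HasSolidNorm E]

theorem norm_le_norm_of_nonneg_of_le {f g : E} (hf : 0 ≤ f) (hfg : f ≤ g) : ‖f‖ ≤ ‖g‖ :=
  norm_le_norm_of_abs_le_abs (by rwa [abs_of_nonneg hf, abs_of_nonneg (hf.trans hfg)])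

theorem OperatorLE.norm_le_norm [NormedSpace ℝ E] {A B : E →L[ℝ] E} (hA : OperatorLE 0 A)
    (hAB : OperatorLE A B) : ‖A‖ ≤ ‖B‖ := by
  refine A.opNorm_le_bound (norm_nonneg B) fun f => ?_
  have habs : |A f| ≤ A |f| := by
    refine abs_le'.2 ⟨hA.map_mono (le_abs_self f), ?_⟩
    rw [← map_neg]
    exact hA.map_mono (neg_le_abs f)
  calc ‖A f‖ = ‖|A f|‖ := (norm_abs_eq_norm _).symm
    _ ≤ ‖B |f|‖ := norm_le_norm_of_nonneg_of_le (abs_nonneg _)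
        (habs.trans (hAB _ (abs_nonneg f)))
    _ ≤ ‖B‖ * ‖f‖ := (B.le_opNorm _).trans_eq (by rw [norm_abs_eq_norm])

theorem tendsto_of_le_of_iterated_limit {α : Type*} {l : Filter α} {x : α → E} {y : ℕ → α → E}
    {u : ℕ → E} {L : E} (hxL : ∀ᶠ a in l, x a ≤ L) (hyx : ∀ n, ∀ᶠ a in l, y n a ≤ x a)
    (hy : ∀ n, Tendsto (y n) l (𝓝 (u n))) (hu : Tendsto u atTop (𝓝 L)) :
    Tendsto x l (𝓝 L) := by
  rw [Metric.tendsto_nhds]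
  intro δ hδ
  obtain ⟨n, hn⟩ := (Metric.tendsto_nhds.1 hu δ hδ).exists
  have hyL : ∀ᶠ a in l, dist (y n a) L < δ :=
    ((hy n).dist tendsto_const_nhds).eventually_lt_const hn
  filter_upwards [hxL, hyx n, hyL] with a hxa hya hda
  rw [dist_comm, dist_eq_norm] at hda ⊢
  exact (norm_le_norm_of_nonneg_of_le (sub_nonneg.2 hxa) (sub_le_sub_left hya L)).trans_lt hda

end BanachLattice

section Truncation

variable {Ω : Type*} {V : Ω → ℝ≥0∞} {ω : Ω} {ε : ℝ}

theorem trunc_nonneg (V : Ω → ℝ≥0∞) (n : ℕ) (ω : Ω) : 0 ≤ trunc V n ω := ENNReal.toReal_nonneg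

theorem trunc_of_eq_top (h : V ω = ∞) (n : ℕ) : trunc V n ω = n := by simp [trunc, h]

theorem trunc_of_ne_top (h : V ω ≠ ∞) (n : ℕ) : trunc V n ω = min (V ω).toReal n := by
  rw [trunc, ENNReal.toReal_min h (ENNReal.natCast_ne_top n), ENNReal.toReal_natCast]

theorem trunc_le (V : Ω → ℝ≥0∞) (n : ℕ) (ω : Ω) : trunc V n ω ≤ n := by
  simpa [trunc] using ENNReal.toReal_mono (ENNReal.natCast_ne_top n) (min_le_right (V ω) n)

theorem trunc_smulRate_of_eq_top (hε : 0 < ε) (h : V ω = ∞) (n : ℕ) :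
    trunc (smulRate ε V) n ω = n :=
  trunc_of_eq_top (by rw [smulRate, h, ENNReal.mul_top (by simpa using hε)]) n

theorem trunc_smulRate_of_ne_top (hε : 0 < ε) (h : V ω ≠ ∞) (n : ℕ) :
    trunc (smulRate ε V) n ω = min (ε * (V ω).toReal) n := by
  have hne : smulRate ε V ω ≠ ∞ := ENNReal.mul_ne_top ENNReal.ofReal_ne_top h
  rw [trunc_of_ne_top hne, smulRate, ENNReal.toReal_mul, ENNReal.toReal_ofReal hε.le]

theorem trunc_smulRate_le_trunc (hε0 : 0 < ε) (hε1 : ε ≤ 1) (V : Ω → ℝ≥0∞) (n : ℕ) (ω : Ω) :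
    trunc (smulRate ε V) n ω ≤ trunc V n ω := by
  by_cases h : V ω = ∞
  · rw [trunc_of_eq_top h, trunc_smulRate_of_eq_top hε0 h]
  · rw [trunc_of_ne_top h, trunc_smulRate_of_ne_top hε0 h]
    exact min_le_min (mul_le_of_le_one_left ENNReal.toReal_nonneg hε1) le_rfl

theorem mul_trunc_le_trunc_smulRate (hε0 : 0 < ε) (hε1 : ε ≤ 1) (V : Ω → ℝ≥0∞) (n : ℕ) (ω : Ω) :
    ε * trunc V n ω ≤ trunc (smulRate ε V) n ω := by
  by_cases h : V ω = ∞
  · rw [trunc_of_eq_top h, trunc_smulRate_of_eq_top hε0 h]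
    exact mul_le_of_le_one_left n.cast_nonneg hε1
  · rw [trunc_of_ne_top h, trunc_smulRate_of_ne_top hε0 h, mul_min_of_nonneg _ _ hε0.le]
    exact min_le_min le_rfl (mul_le_of_le_one_left n.cast_nonneg hε1)

theorem trunc_smulRate_le_mul_trunc (hε : 0 < ε) (V : Ω → ℝ≥0∞) {m n : ℕ} (hmn : m ≤ ε * n)
    (ω : Ω) : trunc (smulRate ε V) m ω ≤ ε * trunc V n ω := by
  by_cases h : V ω = ∞
  · rwa [trunc_of_eq_top h, trunc_smulRate_of_eq_top hε h]
  · rw [trunc_of_ne_top h, trunc_smulRate_of_ne_top hε h, mul_min_of_nonneg _ _ hε.le]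
    exact min_le_min le_rfl hmn

theorem trunc_add_trunc_smulRate_le (hε0 : 0 < ε) (hε1 : ε ≤ 1) (V : Ω → ℝ≥0∞) {k m n : ℕ}
    (hk : n + m ≤ k) (ω : Ω) :
    trunc V n ω + trunc (smulRate ε V) m ω ≤ trunc V k ω + ε * n := by
  have hk' : (n : ℝ) + m ≤ k := mod_cast hk
  have hεn : 0 ≤ ε * n := by positivity
  by_cases h : V ω = ∞
  · rw [trunc_of_eq_top h, trunc_of_eq_top h, trunc_smulRate_of_eq_top hε0 h]
    linarith
  · rw [trunc_of_ne_top h, trunc_of_ne_top h, trunc_smulRate_of_ne_top hε0 h]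
    generalize (V ω).toReal = v
    rcases le_total v k with hvk | hkv
    · rw [min_eq_left hvk]
      rcases le_total v n with hvn | hnv
      · rw [min_eq_left hvn]
        linarith [min_le_left (ε * v) m, mul_le_mul_of_nonneg_left hvn hε0.le]
      · rw [min_eq_right hnv]
        linarith [min_le_left (ε * v) m, mul_nonneg (sub_nonneg.2 hε1) (sub_nonneg.2 hnv)]
    · rw [min_eq_right hkv]
      linarith [min_le_right v n, min_le_right (ε * v) m]

end Truncation

section Multiplication

variable {Ω : Type*} [MeasurableSpace Ω] {μ : Measure Ω} {p : ℝ≥0∞}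

theorem LocallyMeasurable.comp {α β : Type*} [MeasurableSpace α] [MeasurableSpace β] {V : Ω → α}
    {φ : α → β} (hV : LocallyMeasurable μ V) (hφ : Measurable φ) :
    LocallyMeasurable μ fun ω => φ (V ω) := by
  intro B hB hμB
  obtain ⟨g, hg, hVg⟩ := hV B hB hμB
  exact ⟨fun ω => φ (g ω), hφ.comp hg, hVg.mono fun ω hω => congrArg φ hω⟩

theorem LocallyMeasurable.trunc {V : Ω → ℝ≥0∞} (hV : LocallyMeasurable μ V) (n : ℕ) :
    LocallyMeasurable μ (trunc V n) :=
  hV.comp (φ := fun v => (min v (n : ℝ≥0∞)).toReal) (by fun_prop)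

theorem LocallyMeasurable.smulRate {V : Ω → ℝ≥0∞} (hV : LocallyMeasurable μ V) (ε : ℝ) :
    LocallyMeasurable μ (smulRate ε V) :=
  hV.comp (φ := fun v => ENNReal.ofReal ε * v) (measurable_const_mul _)

/-- `f` vanishes off a `σ`-finite set, and local measurability of `W` controls `W * f` on each of
countably many pieces of finite measure. -/
theorem LocallyMeasurable.aestronglyMeasurable_mul {W : Ω → ℝ} (hW : LocallyMeasurable μ W)
    {f : Ω → ℝ} (hf : AEFinStronglyMeasurable f μ) :
    AEStronglyMeasurable (fun ω => W ω * f ω) μ := by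
  obtain ⟨t, ht, hft, hσ⟩ := hf.exists_set_sigmaFinite
  have hfinite : ∀ B, MeasurableSet B → μ B < ∞ →
      AEStronglyMeasurable (fun ω => W ω * f ω) (μ.restrict B) := by
    intro B hB hμB
    obtain ⟨g, hg, hWg⟩ := hW B hB hμB
    exact (hg.aestronglyMeasurable.mul hf.aemeasurable.aestronglyMeasurable.restrict).congr
      (hWg.mono fun ω hω => congrArg (· * f ω) hω.symm)
  rw [← Measure.restrict_univ (μ := μ), ← union_compl_self t, aestronglyMeasurable_union_iff]
  constructor
  · have hcover : t = ⋃ i, spanningSets (μ.restrict t) i ∩ t := by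
      rw [← iUnion_inter, iUnion_spanningSets, univ_inter]
    rw [hcover, aestronglyMeasurable_iUnion_iff]
    intro i
    have hi := measurableSet_spanningSets (μ.restrict t) i
    refine hfinite _ (hi.inter ht) ?_
    rw [← Measure.restrict_apply hi]
    exact measure_spanningSets_lt_top _ i
  · exact aestronglyMeasurable_zero.congr (hft.mono fun ω hω => by simp [hω])

variable [Fact (1 ≤ p)]

/-- `B` is the operator on `L_p(μ)` of multiplication by `W`. -/
def IsMultiplication (W : Ω → ℝ) (B : Lp ℝ p μ →L[ℝ] Lp ℝ p μ) : Prop :=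
  ∀ f, B f =ᵐ[μ] fun ω => W ω * f ω

theorem LocallyMeasurable.exists_isMultiplication (hp : p ≠ ∞) {W : Ω → ℝ}
    (hW : LocallyMeasurable μ W) {c : ℝ} (hc : ∀ ω, |W ω| ≤ c) :
    ∃ B : Lp ℝ p μ →L[ℝ] Lp ℝ p μ, IsMultiplication W B := by
  have hp0 : p ≠ 0 := (one_pos.trans_le Fact.out).ne'
  have hnorm : ∀ f : Ω → ℝ, ∀ ω, ‖W ω * f ω‖ ≤ c * ‖f ω‖ := fun f ω => by
    rw [norm_mul]
    exact mul_le_mul_of_nonneg_right (hc ω) (norm_nonneg _)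
  have hmem : ∀ f : Lp ℝ p μ, MemLp (fun ω => W ω * f ω) p μ := fun f =>
    (Lp.memLp f).of_le_mul
      (hW.aestronglyMeasurable_mul ((Lp.memLp f).aefinStronglyMeasurable hp0 hp))
      (Eventually.of_forall (hnorm f))
  let L : Lp ℝ p μ →ₗ[ℝ] Lp ℝ p μ :=
    { toFun f := (hmem f).toLp
      map_add' f g := by
        rw [← MemLp.toLp_add, MemLp.toLp_eq_toLp_iff]
        filter_upwards [Lp.coeFn_add f g] with ω hω
        simp only [hω, Pi.add_apply, mul_add]
      map_smul' a f := by
        rw [RingHom.id_apply, ← MemLp.toLp_const_smul, MemLp.toLp_eq_toLp_iff]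
        filter_upwards [Lp.coeFn_smul a f] with ω hω
        simp only [hω, Pi.smul_apply, smul_eq_mul, mul_left_comm] }
  refine ⟨L.mkContinuous c fun f => Lp.norm_le_mul_norm_of_ae_le_mul ?_,
    fun f => (hmem f).coeFn_toLp⟩
  filter_upwards [(hmem f).coeFn_toLp] with ω hω
  exact (congrArg norm hω).trans_le (hnorm f ω)

theorem LocallyMeasurable.exists_isMultiplication_trunc (hp : p ≠ ∞) {V : Ω → ℝ≥0∞}
    (hV : LocallyMeasurable μ V) (n : ℕ) :
    ∃ B : Lp ℝ p μ →L[ℝ] Lp ℝ p μ, IsMultiplication (Absorption.trunc V n) B :=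
  (hV.trunc n).exists_isMultiplication hp fun ω => by
    rw [abs_of_nonneg (trunc_nonneg V n ω)]
    exact trunc_le V n ω

namespace IsMultiplication

variable {W W' : Ω → ℝ} {B B' : Lp ℝ p μ →L[ℝ] Lp ℝ p μ}

theorem zero : IsMultiplication (fun _ => 0) (0 : Lp ℝ p μ →L[ℝ] Lp ℝ p μ) := fun f => by
  filter_upwards [Lp.coeFn_zero ℝ p μ] with ω hω
  rw [zero_apply, hω, Pi.zero_apply, zero_mul]

theorem smul_id (c : ℝ) :
    IsMultiplication (fun _ => c) (c • ContinuousLinearMap.id ℝ (Lp ℝ p μ)) :=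
  fun f => Lp.coeFn_smul c f

theorem add (hB : IsMultiplication W B) (hB' : IsMultiplication W' B') :
    IsMultiplication (fun ω => W ω + W' ω) (B + B') := fun f => by
  filter_upwards [hB f, hB' f, Lp.coeFn_add (B f) (B' f)] with ω hω hω' hadd
  rw [add_apply, hadd, Pi.add_apply, hω, hω', add_mul]

theorem sub (hB : IsMultiplication W B) (hB' : IsMultiplication W' B') :
    IsMultiplication (fun ω => W ω - W' ω) (B - B') := fun f => by
  filter_upwards [hB f, hB' f, Lp.coeFn_sub (B f) (B' f)] with ω hω hω' hsub
  rw [sub_apply, hsub, Pi.sub_apply, hω, hω', sub_mul]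

theorem const_smul (hB : IsMultiplication W B) (c : ℝ) :
    IsMultiplication (fun ω => c * W ω) (c • B) := fun f => by
  filter_upwards [hB f, Lp.coeFn_smul c (B f)] with ω hω hsmul
  rw [smul_apply, hsmul, Pi.smul_apply, hω, smul_eq_mul, mul_assoc]

theorem operatorLE (hB : IsMultiplication W B) (hB' : IsMultiplication W' B')
    (h : ∀ ω, W ω ≤ W' ω) : OperatorLE B B' := fun f hf => by
  rw [← Lp.coeFn_nonneg] at hf
  rw [← Lp.coeFn_le]
  filter_upwards [hf, hB f, hB' f] with ω hfω hω hω'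
  rw [hω, hω']
  exact mul_le_mul_of_nonneg_right (h ω) hfω

end IsMultiplication

instance : IsOrderedModule ℝ (Lp ℝ p μ) where
  smul_le_smul_of_nonneg_left a ha f g hfg := by
    rw [← Lp.coeFn_le] at hfg ⊢
    filter_upwards [hfg, Lp.coeFn_smul a f, Lp.coeFn_smul a g] with ω hω hf hg
    rw [hf, hg]
    exact mul_le_mul_of_nonneg_left hω ha
  smul_le_smul_of_nonneg_right f hf a b hab := by
    rw [← Lp.coeFn_nonneg] at hf
    rw [← Lp.coeFn_le]
    filter_upwards [hf, Lp.coeFn_smul a f, Lp.coeFn_smul b f] with ω hω ha hb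
    rw [ha, hb]
    exact mul_le_mul_of_nonneg_right hab hω

end Multiplication

section LimitSemigroup

variable {E : Type*} [NormedAddCommGroup E] [NormedSpace ℝ E]
variable {ι : Type*} {l : Filter ι} [l.NeBot]
variable {S : ι → ℝ → E →L[ℝ] E} {R : ℝ → E →L[ℝ] E} {P : E →L[ℝ] E} {M t : ℝ}

theorem IsSemigroup.of_tendsto (hS : ∀ k, IsSemigroup (S k))
    (hM : ∀ τ, ∃ M, ∀ k, ∀ s ∈ Icc 0 τ, ‖S k s‖ ≤ M)
    (hR : ∀ t, 0 ≤ t → ∀ f, Tendsto (fun k => S k t f) l (𝓝 (R t f))) : IsSemigroup R := by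
  refine ⟨?_, fun s t hs ht => ?_⟩ <;> ext1 f
  · refine tendsto_nhds_unique (hR 0 le_rfl f) ?_
    simp only [(hS _).zero_apply]
    exact tendsto_const_nhds
  · obtain ⟨M, hM⟩ := hM s
    refine tendsto_nhds_unique (hR _ (add_nonneg hs ht) f) ?_
    simp only [← (hS _).apply_apply hs ht]
    exact tendsto_apply_of_norm_le (fun k => hM k s ⟨hs, le_rfl⟩) (hR s hs _) (hR t ht f)

theorem norm_le_of_tendsto_apply {A : ι → E →L[ℝ] E} {A₀ : E →L[ℝ] E} (hM : ∀ k, ‖A k‖ ≤ M)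
    (hA : ∀ f, Tendsto (fun k => A k f) l (𝓝 (A₀ f))) : ‖A₀‖ ≤ M := by
  obtain ⟨k⟩ := l.nonempty_of_neBot
  exact A₀.opNorm_le_bound ((norm_nonneg _).trans (hM k)) fun f =>
    le_of_tendsto' (hA f).norm fun k => (A k).le_of_opNorm_le (hM k) f

theorem IsSemigroup.eq_zero_of_tendsto_zero (hR : IsSemigroup R)
    (hM : ∀ s ∈ Icc 0 t, ‖R s‖ ≤ M) {f : E} (hf : Tendsto (fun s => R s f) (𝓝[>] 0) (𝓝 0))
    (ht : 0 < t) : R t f = 0 := by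
  have hlim : Tendsto (fun s => M * ‖R s f‖) (𝓝[>] 0) (𝓝 0) := by
    simpa using hf.norm.const_mul M
  refine norm_le_zero_iff.1 (ge_of_tendsto hlim ?_)
  filter_upwards [Ioo_mem_nhdsGT ht] with s hs
  have hts : 0 ≤ t - s := (sub_pos.2 hs.2).le
  calc ‖R t f‖ = ‖R (t - s) (R s f)‖ := by rw [hR.apply_apply hts hs.1.le, sub_add_cancel]
    _ ≤ M * ‖R s f‖ := (R (t - s)).le_of_opNorm_le (hM _ ⟨hts, sub_le_self t hs.1.le⟩) _

theorem IsSemigroup.apply_limit_zero (hR : IsSemigroup R)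
    (hM : ∀ s ∈ Icc 0 t, ‖R s‖ ≤ M)
    (hP : ∀ f, Tendsto (fun s => R s f) (𝓝[>] 0) (𝓝 (P f))) (hPP : ∀ f, P (P f) = P f)
    (ht : 0 < t) (f : E) : R t (P f) = R t f := by
  have hzero : P (P f - f) = 0 := by rw [map_sub, hPP, sub_self]
  have hR0 := hR.eq_zero_of_tendsto_zero hM (hzero ▸ hP (P f - f)) ht
  rwa [map_sub, sub_eq_zero] at hR0

theorem tendsto_dyson_of_limit_zero [CompleteSpace E] [l.IsCountablyGenerated]
    {F : Submodule ℝ E} [CompleteSpace F] {Q : ℝ → F →L[ℝ] F} {B : E →L[ℝ] E} {C : F →L[ℝ] F}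
    (hS : ∀ k, IsC0Semigroup (S k)) (hM : ∀ τ, ∃ M, ∀ k, ∀ s ∈ Icc 0 τ, ‖S k s‖ ≤ M)
    (hR : ∀ t, 0 ≤ t → ∀ f, Tendsto (fun k => S k t f) l (𝓝 (R t f)))
    (hP : ∀ f, Tendsto (fun s => R s f) (𝓝[>] 0) (𝓝 (P f))) (hPP : ∀ f, P (P f) = P f)
    (hQ : IsC0Semigroup Q) (hQR : ∀ t, 0 ≤ t → ∀ f : F, (Q t f : E) = R t f)
    (hBC : ∀ f : F, (C f : E) = B f) {f : E} {z : F} (hz : (z : E) = P f) (ht : 0 < t) :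
    Tendsto (fun k => dyson (S k) B f t) l (𝓝 ((dyson Q C z t : F) : E)) := by
  have hRsemi := IsSemigroup.of_tendsto (fun k => (hS k).1) hM hR
  have hRP : ∀ s, 0 < s → R s z = R s f := by
    intro s hs
    obtain ⟨M, hM⟩ := hM s
    rw [hz]
    exact hRsemi.apply_limit_zero (fun r hr => norm_le_of_tendsto_apply
      (fun k => hM k r hr) (hR r hr.1)) hP hPP hs f
  obtain ⟨M, hM⟩ := hM t
  refine tendsto_dyson (J := F.subtypeL) (fun k => (hS k).isStronglyContinuous)
    hQ.isStronglyContinuous hM (fun w => (hBC w).symm) (fun s hs w => ?_) (fun s hs => ?_) ht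
  · simpa only [Submodule.subtypeL_apply, hQR s hs] using hR s hs w
  · simpa only [Submodule.subtypeL_apply, hQR s hs.le, hRP s hs] using hR s hs.le f

end LimitSemigroup

section BandProjection

variable {Ω : Type*} [MeasurableSpace Ω] {μ : Measure Ω} {p : ℝ≥0∞} [Fact (1 ≤ p)]
variable {P B : Lp ℝ p μ →L[ℝ] Lp ℝ p μ} {F : Submodule ℝ (Lp ℝ p μ)}

namespace IsBandProjection

theorem apply_apply (hP : IsBandProjection P) (f : Lp ℝ p μ) : P (P f) = P f :=
  congrArg (· f) hP.1

theorem mem_iff (hP : IsBandProjection P) (hF : (F : Set (Lp ℝ p μ)) = range P) {f : Lp ℝ p μ} :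
    f ∈ F ↔ P f = f := by
  rw [← SetLike.mem_coe, hF]
  exact ⟨fun ⟨g, hg⟩ => by rw [← hg, hP.apply_apply], fun hf => ⟨f, hf⟩⟩

theorem completeSpace (hP : IsBandProjection P) (hF : (F : Set (Lp ℝ p μ)) = range P) :
    CompleteSpace F := by
  have hclosed : IsClosed {f | P f = f} := isClosed_eq P.continuous continuous_id
  have hFP : (F : Set (Lp ℝ p μ)) = {f | P f = f} := Set.ext fun f => hP.mem_iff hF
  exact (hFP ▸ hclosed : IsClosed (F : Set (Lp ℝ p μ))).completeSpace_coe

/-- Both `B (P f)` and `c • P f - B (P f)` are nonnegative, hence decrease under `P`, while their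
sum is fixed by `P`. -/
theorem apply_map_apply_of_nonneg (hP : IsBandProjection P) {c : ℝ} (hB : OperatorLE 0 B)
    (hBc : OperatorLE B (c • ContinuousLinearMap.id ℝ (Lp ℝ p μ))) {f : Lp ℝ p μ} (hf : 0 ≤ f) :
    P (B (P f)) = B (P f) := by
  have hPf := (hP.2 f hf).1
  have hle : P (c • P f - B (P f)) ≤ c • P f - B (P f) :=
    (hP.2 _ (sub_nonneg.2 (hBc _ hPf))).2
  rw [map_sub, map_smul, hP.apply_apply] at hle
  exact le_antisymm (hP.2 _ (hB.map_nonneg hPf)).2 ((_root_.sub_le_sub_iff_left _).1 hle)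

theorem apply_map_apply (hP : IsBandProjection P) {c : ℝ} (hB : OperatorLE 0 B)
    (hBc : OperatorLE B (c • ContinuousLinearMap.id ℝ (Lp ℝ p μ))) (f : Lp ℝ p μ) :
    P (B (P f)) = B (P f) := by
  rw [← posPart_sub_negPart f]
  simp only [map_sub, hP.apply_map_apply_of_nonneg hB hBc (posPart_nonneg f),
    hP.apply_map_apply_of_nonneg hB hBc (negPart_nonneg f)]

end IsBandProjection

theorem IsMultiplication.map_mem {W : Ω → ℝ} {c : ℝ} (hB : IsMultiplication W B)
    (hW0 : ∀ ω, 0 ≤ W ω) (hWc : ∀ ω, W ω ≤ c) (hP : IsBandProjection P)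
    (hF : (F : Set (Lp ℝ p μ)) = range P) : ∀ f ∈ F, B f ∈ F := by
  intro f hf
  rw [hP.mem_iff hF] at hf ⊢
  have hPB := hP.apply_map_apply (IsMultiplication.zero.operatorLE hB hW0)
    (hB.operatorLE (.smul_id c) hWc) f
  rwa [hf] at hPB

theorem IsPerturbedSGSub.isPerturbation {W : Ω → ℝ} {T S : ℝ → F →L[ℝ] F} {C : F →L[ℝ] F}
    (hS : IsPerturbedSGSub μ p F T S fun ω => -W ω) (hT : IsC0Semigroup T)
    (hC : ∀ f : F, (C f : Lp ℝ p μ) =ᵐ[μ] fun ω => W ω * (f : Lp ℝ p μ) ω) :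
    IsPerturbation T C S where
  base := hT
  perturbed := hS.1
  inGenerator f g hg := by
    obtain ⟨g₀, hg₀, hgg₀⟩ := (hS.2 f g).1 hg
    suffices hsub : g - C f = g₀ by rwa [hsub]
    refine Subtype.ext (Lp.ext ?_)
    rw [Submodule.coe_sub]
    filter_upwards [hgg₀, hC f, Lp.coeFn_sub (g : Lp ℝ p μ) (C f : Lp ℝ p μ)] with ω hg hC hsub
    rw [hsub, Pi.sub_apply, hg, hC]
    ring

end BandProjection

section PerturbedSemigroups

variable {Ω : Type*} [MeasurableSpace Ω] {μ : Measure Ω} {p : ℝ≥0∞} [Fact (1 ≤ p)]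
variable {T S Z : ℝ → Lp ℝ p μ →L[ℝ] Lp ℝ p μ} {W W' : Ω → ℝ} {B : Lp ℝ p μ →L[ℝ] Lp ℝ p μ}
variable {t : ℝ}

theorem IsPositiveSG.operatorLE (hT : IsPositiveSG T) : ∀ t, 0 ≤ t → OperatorLE 0 (T t) :=
  fun t ht => operatorLE_zero_iff.2 (hT t ht)

theorem IsC0Semigroup.isPerturbedSG_zero (hT : IsC0Semigroup T) :
    IsPerturbedSG μ p T T fun _ => 0 := by
  refine ⟨hT, fun f g => ⟨fun h => ⟨g, h, by simp⟩, ?_⟩⟩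
  rintro ⟨g₀, h, hg⟩
  rwa [Lp.ext (f := g) (g := g₀) (by simpa using hg)]

namespace IsPerturbedSG

theorem isPerturbation (hS : IsPerturbedSG μ p T S W) (hZ : IsPerturbedSG μ p T Z W')
    (hB : IsMultiplication (fun ω => W ω - W' ω) B) : IsPerturbation S B Z where
  base := hS.1
  perturbed := hZ.1
  inGenerator f g hg := by
    obtain ⟨g₀, hg₀, hgg₀⟩ := (hZ.2 f g).1 hg
    refine (hS.2 _ _).2 ⟨g₀, hg₀, ?_⟩
    filter_upwards [hgg₀, hB f, Lp.coeFn_sub g (B f)] with ω hg hB hsub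
    rw [hsub, Pi.sub_apply, hg, hB]
    ring

theorem isPositiveSG (hS : IsPerturbedSG μ p T S W) (hT : IsC0Semigroup T) (hT0 : IsPositiveSG T)
    (hB : IsMultiplication W B) {c : ℝ} (hc : ∀ ω, W ω ≤ c) : IsPositiveSG S := fun t ht => by
  have hB' := IsMultiplication.zero.sub hB
  have hle : OperatorLE 0 (0 - B + c • ContinuousLinearMap.id ℝ (Lp ℝ p μ)) :=
    IsMultiplication.zero.operatorLE (hB'.add (.smul_id c)) fun ω => by linarith [hc ω]
  exact operatorLE_zero_iff.1 ((hT.isPerturbedSG_zero.isPerturbation hS hB').apply_nonneg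
    hT0.operatorLE hle ht)

theorem norm_le (hS : IsPerturbedSG μ p T S W) (hT : IsC0Semigroup T) (hT0 : IsPositiveSG T)
    (hS0 : IsPositiveSG S) (hB : IsMultiplication W B) (hW : ∀ ω, 0 ≤ W ω) (ht : 0 ≤ t) :
    ‖S t‖ ≤ ‖T t‖ := by
  have hB' := hB.sub .zero
  refine OperatorLE.norm_le_norm (hS0.operatorLE t ht) ?_
  exact (hS.isPerturbation hT.isPerturbedSG_zero hB').base_le
    hS0.operatorLE hT0.operatorLE
    (IsMultiplication.zero.operatorLE hB' fun ω => by simpa using hW ω) ht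

end IsPerturbedSG

end PerturbedSemigroups

section TruncatedSemigroups

variable {Ω : Type*} [MeasurableSpace Ω] {μ : Measure Ω} {p : ℝ≥0∞} [Fact (1 ≤ p)]
variable {T : ℝ → Lp ℝ p μ →L[ℝ] Lp ℝ p μ} {V : Ω → ℝ≥0∞}
variable {S R : ℕ → ℝ → Lp ℝ p μ →L[ℝ] Lp ℝ p μ} {B C : ℕ → Lp ℝ p μ →L[ℝ] Lp ℝ p μ}

/-- `S n` is the semigroup `e^{t(A - V ∧ n)}`, where `A` is the generator of `T`, and `B n` is the
operator of multiplication by `V ∧ n`. -/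
structure IsTruncatedSG (T : ℝ → Lp ℝ p μ →L[ℝ] Lp ℝ p μ) (V : Ω → ℝ≥0∞)
    (S : ℕ → ℝ → Lp ℝ p μ →L[ℝ] Lp ℝ p μ) (B : ℕ → Lp ℝ p μ →L[ℝ] Lp ℝ p μ) : Prop where
  isPerturbedSG : ∀ n, IsPerturbedSG μ p T (S n) (trunc V n)
  isMultiplication : ∀ n, IsMultiplication (trunc V n) (B n)

theorem exists_isTruncatedSG (hp : p ≠ ∞) (hV : LocallyMeasurable μ V)
    (hS : ∀ n, IsPerturbedSG μ p T (S n) (trunc V n)) : ∃ B, IsTruncatedSG T V S B := by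
  choose B hB using hV.exists_isMultiplication_trunc (p := p) hp
  exact ⟨B, hS, hB⟩

namespace IsTruncatedSG

theorem isPositiveSG (hS : IsTruncatedSG T V S B) (hT : IsC0Semigroup T) (hT0 : IsPositiveSG T)
    (n : ℕ) : IsPositiveSG (S n) :=
  (hS.isPerturbedSG n).isPositiveSG hT hT0 (hS.isMultiplication n) (trunc_le V n)

theorem exists_norm_le (hS : IsTruncatedSG T V S B) (hT : IsC0Semigroup T) (hT0 : IsPositiveSG T)
    (τ : ℝ) : ∃ M, ∀ k, ∀ s ∈ Icc 0 τ, ‖S k s‖ ≤ M := by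
  obtain ⟨M, hM⟩ := hT.isStronglyContinuous.exists_norm_le τ
  exact ⟨M, fun k s hs => ((hS.isPerturbedSG k).norm_le hT hT0 (hS.isPositiveSG hT hT0 k)
    (hS.isMultiplication k) (trunc_nonneg V k) hs.1).trans (hM s hs)⟩

theorem tendsto_dyson (hS : IsTruncatedSG T V S B) (hT : IsC0Semigroup T) (hT0 : IsPositiveSG T)
    {TV : ℝ → Lp ℝ p μ →L[ℝ] Lp ℝ p μ}
    (hTV : ∀ t, 0 ≤ t → ∀ f, Tendsto (fun n => S n t f) atTop (𝓝 (TV t f)))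
    {P : Lp ℝ p μ →L[ℝ] Lp ℝ p μ}
    (hP : ∀ f, Tendsto (fun t => TV t f) (𝓝[>] 0) (𝓝 (P f))) (hPband : IsBandProjection P)
    {F : Submodule ℝ (Lp ℝ p μ)} (hF : (F : Set (Lp ℝ p μ)) = range P) {Q U : ℝ → F →L[ℝ] F}
    (hQ : IsC0Semigroup Q) (hQTV : ∀ t, 0 ≤ t → ∀ f : F, (Q t f : Lp ℝ p μ) = TV t f) {n : ℕ}
    (hU : IsPerturbedSGSub μ p F Q U fun ω => -trunc V n ω) {f : Lp ℝ p μ} {z : F}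
    (hz : (z : Lp ℝ p μ) = P f) {t : ℝ} (ht : 0 < t) :
    Tendsto (fun k => dyson (S k) (B n) f t) atTop (𝓝 (U t z : Lp ℝ p μ)) := by
  have : CompleteSpace F := hPband.completeSpace hF
  let C : F →L[ℝ] F := (B n).restrict
    ((hS.isMultiplication n).map_mem (trunc_nonneg V n) (trunc_le V n) hPband hF)
  rw [(hU.isPerturbation hQ (C := C) fun f => hS.isMultiplication n f).apply_eq_dyson z ht.le]
  exact tendsto_dyson_of_limit_zero (fun k => (hS.isPerturbedSG k).1) (hS.exists_norm_le hT hT0)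
    hTV hP hPband.apply_apply hQ hQTV (fun _ => rfl) hz ht

variable {ε t : ℝ} {f y L : Lp ℝ p μ} {u : ℕ → Lp ℝ p μ}

theorem dyson_le_exp_smul (hS : IsTruncatedSG T V S B) (hR : IsTruncatedSG T (smulRate ε V) R C)
    (hS0 : ∀ n, IsPositiveSG (S n)) (hε0 : 0 < ε) (hε1 : ε ≤ 1) (hf : 0 ≤ f) (ht : 0 ≤ t)
    {k m n : ℕ} (hk : n + m ≤ k) :
    dyson (S k) (B n) f t ≤ Real.exp (ε * n * t) • R m t f := by
  have hBC := (hS.isMultiplication k).sub (hR.isMultiplication m)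
  have hle : OperatorLE (B n) (B k - C m + (ε * n) • ContinuousLinearMap.id ℝ (Lp ℝ p μ)) :=
    (hS.isMultiplication n).operatorLE (hBC.add (.smul_id (ε * n))) fun ω => by
      linarith [trunc_add_trunc_smulRate_le hε0 hε1 V hk ω]
  exact ((hS.isPerturbedSG k).isPerturbation (hR.isPerturbedSG m) hBC).dyson_le_exp_smul
    (hS0 k).operatorLE
    (IsMultiplication.zero.operatorLE (hS.isMultiplication n) (trunc_nonneg V n)) hle hf ht

theorem exp_neg_smul_le_limit (hS : IsTruncatedSG T V S B)
    (hR : IsTruncatedSG T (smulRate ε V) R C) (hS0 : ∀ n, IsPositiveSG (S n)) (hε0 : 0 < ε)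
    (hε1 : ε ≤ 1) (hf : 0 ≤ f) (ht : 0 ≤ t) {n : ℕ} {w : Lp ℝ p μ}
    (hw : Tendsto (fun k => dyson (S k) (B n) f t) atTop (𝓝 w))
    (hy : Tendsto (fun m => R m t f) atTop (𝓝 y)) : Real.exp (-(ε * n * t)) • w ≤ y := by
  have hm : ∀ m, w ≤ Real.exp (ε * n * t) • R m t f := fun m =>
    le_of_tendsto hw ((eventually_ge_atTop (n + m)).mono fun k hk =>
      hS.dyson_le_exp_smul hR hS0 hε0 hε1 hf ht hk)
  have hwy : w ≤ Real.exp (ε * n * t) • y := ge_of_tendsto' (hy.const_smul _) hm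
  calc Real.exp (-(ε * n * t)) • w
      ≤ Real.exp (-(ε * n * t)) • Real.exp (ε * n * t) • y :=
        smul_le_smul_of_nonneg_left hwy (Real.exp_pos _).le
    _ = y := by rw [smul_smul, ← Real.exp_add, neg_add_cancel, Real.exp_zero, one_smul]

theorem inv_smul_operatorLE (hS : IsTruncatedSG T V S B)
    (hR : IsTruncatedSG T (smulRate ε V) R C) (hε : 0 < ε) {m n : ℕ} (hmn : m ≤ ε * n) :
    OperatorLE (ε⁻¹ • C m) (B n) :=
  ((hR.isMultiplication m).const_smul ε⁻¹).operatorLE (hS.isMultiplication n) fun ω =>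
    (inv_mul_le_iff₀ hε).2 (trunc_smulRate_le_mul_trunc hε V hmn ω)

theorem sub_operatorLE_convex_combination (hS : IsTruncatedSG T V S B)
    (hR : IsTruncatedSG T (smulRate ε V) R C) (hε0 : 0 < ε) (hε1 : ε ≤ 1) (m n : ℕ) :
    OperatorLE (B n - C n) (ε • (ε⁻¹ • C m - C m) + (1 - ε) • (B n - C m)) := by
  have hB := hS.isMultiplication
  have hC := hR.isMultiplication
  have hcombination := ((((hC m).const_smul ε⁻¹).sub (hC m)).const_smul ε).add
    (((hB n).sub (hC m)).const_smul (1 - ε))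
  refine ((hB n).sub (hC n)).operatorLE hcombination fun ω => ?_
  have hcancel := mul_inv_cancel_left₀ hε0.ne' (trunc (smulRate ε V) m ω)
  linarith [mul_trunc_le_trunc_smulRate hε0 hε1 V n ω]

theorem apply_le_convex_combination (hS : IsTruncatedSG T V S B)
    (hR : IsTruncatedSG T (smulRate ε V) R C) (hS0 : ∀ n, IsPositiveSG (S n)) (hε0 : 0 < ε)
    (hε1 : ε ≤ 1) (hf : 0 ≤ f) (ht : 0 ≤ t) {k m n : ℕ} (hmn : m ≤ ε * n) (hnk : n ≤ k) :
    R k t f ≤ ε • dyson (S k) (B n) f t + (1 - ε) • R m t f := by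
  have hB := hS.isMultiplication
  have hC := hR.isMultiplication
  have hSk := (hS.isPerturbedSG k).1.isStronglyContinuous
  have hmk : m ≤ ε * k := hmn.trans (by gcongr)
  have hdyson : ∀ j, R j t f = dyson (S k) (B k - C j) f t := fun j =>
    ((hS.isPerturbedSG k).isPerturbation (hR.isPerturbedSG j)
      ((hB k).sub (hC j))).apply_eq_dyson f ht
  have hC0 : OperatorLE 0 (C m) := IsMultiplication.zero.operatorLE (hC m) (trunc_nonneg _ m)
  have hA0 : OperatorLE 0 (ε⁻¹ • C m - C m) :=
    IsMultiplication.zero.operatorLE (((hC m).const_smul ε⁻¹).sub (hC m)) fun ω =>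
      sub_nonneg.2 (le_mul_of_one_le_left (trunc_nonneg _ m ω) ((one_le_inv₀ hε0).2 hε1))
  have hAB : OperatorLE (ε⁻¹ • C m - C m) (B n) := fun g hg =>
    (sub_le_self _ (hC0.map_nonneg hg)).trans (hS.inv_smul_operatorLE hR hε0 hmn g hg)
  have hAD : OperatorLE (ε⁻¹ • C m - C m) (B k - C m) := fun g hg =>
    sub_le_sub_right (hS.inv_smul_operatorLE hR hε0 hmk g hg) _
  have hD0 : OperatorLE 0 (B k - C k) :=
    IsMultiplication.zero.operatorLE ((hB k).sub (hC k)) fun ω =>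
      sub_nonneg.2 (trunc_smulRate_le_trunc hε0 hε1 V k ω)
  calc R k t f
      ≤ ε • dyson (S k) (ε⁻¹ • C m - C m) f t + (1 - ε) • R m t f := by
        rw [hdyson k, hdyson m]
        exact dyson_le_convex_combination hSk (hS0 k).operatorLE hA0 hAD hD0 hε0.le
          (sub_nonneg.2 hε1) (add_sub_cancel ε 1)
          (hS.sub_operatorLE_convex_combination hR hε0 hε1 m k) hf ht
    _ ≤ ε • dyson (S k) (B n) f t + (1 - ε) • R m t f :=
        add_le_add_left (smul_le_smul_of_nonneg_left
          (dyson_mono hSk (hS0 k).operatorLE hA0 hAB hf ht) hε0.le) _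

theorem limit_le (hS : IsTruncatedSG T V S B) (hR : IsTruncatedSG T (smulRate ε V) R C)
    (hS0 : ∀ n, IsPositiveSG (S n)) (hε0 : 0 < ε) (hε1 : ε ≤ 1) (hf : 0 ≤ f) (ht : 0 ≤ t)
    (hu : ∀ n, Tendsto (fun k => dyson (S k) (B n) f t) atTop (𝓝 (u n)))
    (hL : Tendsto u atTop (𝓝 L)) (hy : Tendsto (fun m => R m t f) atTop (𝓝 y)) : y ≤ L := by
  have hm : ∀ m' n : ℕ, m' ≤ ε * n → y ≤ ε • u n + (1 - ε) • R m' t f := fun m' n hm'n =>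
    le_of_tendsto_of_tendsto hy (((hu n).const_smul ε).add_const _)
      ((eventually_ge_atTop n).mono fun m hnm =>
        hS.apply_le_convex_combination hR hS0 hε0 hε1 hf ht hm'n hnm)
  have hn : ∀ m' : ℕ, y ≤ ε • L + (1 - ε) • R m' t f := fun m' => by
    have hlarge : Tendsto (fun n : ℕ => ε * n) atTop atTop :=
      tendsto_natCast_atTop_atTop.const_mul_atTop hε0
    exact ge_of_tendsto ((hL.const_smul ε).add_const _)
      ((hlarge.eventually_ge_atTop (m' : ℝ)).mono fun n => hm m' n)
  have hyL : y ≤ ε • L + (1 - ε) • y := ge_of_tendsto' ((hy.const_smul _).const_add _) hn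
  have hsmul : ε • y ≤ ε • L := by
    rw [sub_smul, one_smul, ← add_sub_assoc, le_sub_iff_add_le, add_comm y] at hyL
    exact le_of_add_le_add_right hyL
  exact (smul_le_smul_iff_of_pos_left hε0).1 hsmul

theorem tendsto_absorptionSG (hS : IsTruncatedSG T V S B) (hS0 : ∀ n, IsPositiveSG (S n))
    (hp : p ≠ ∞) (hV : LocallyMeasurable μ V) (hf : 0 ≤ f) (ht : 0 ≤ t)
    (hu : ∀ n, Tendsto (fun k => dyson (S k) (B n) f t) atTop (𝓝 (u n)))
    (hL : Tendsto u atTop (𝓝 L)) {Sε : ℝ → ℝ → Lp ℝ p μ →L[ℝ] Lp ℝ p μ}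
    (hSε : ∀ ε, 0 < ε → IsAbsorptionSG μ p T (smulRate ε V) (Sε ε)) :
    Tendsto (fun ε => Sε ε t f) (𝓝[>] 0) (𝓝 L) := by
  have hsmall : ∀ᶠ ε : ℝ in 𝓝[>] 0, ε ∈ Ioc 0 1 := Ioc_mem_nhdsGT one_pos
  refine tendsto_of_le_of_iterated_limit (y := fun n ε => Real.exp (-(ε * n * t)) • u n)
    (hsmall.mono fun ε hε => ?_) (fun n => hsmall.mono fun ε hε => ?_) (fun n => ?_) hL
  · obtain ⟨R, hR, hRlim⟩ := hSε ε hε.1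
    obtain ⟨C, hRC⟩ := exists_isTruncatedSG hp (hV.smulRate ε) hR
    exact hS.limit_le hRC hS0 hε.1 hε.2 hf ht hu hL (hRlim t ht f)
  · obtain ⟨R, hR, hRlim⟩ := hSε ε hε.1
    obtain ⟨C, hRC⟩ := exists_isTruncatedSG hp (hV.smulRate ε) hR
    exact hS.exp_neg_smul_le_limit hRC hS0 hε.1 hε.2 hf ht (hu n) (hRlim t ht f)
  · have hcont : Continuous fun ε : ℝ => Real.exp (-(ε * n * t)) • u n := by fun_prop
    simpa using (hcont.tendsto 0).mono_left nhdsWithin_le_nhds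

end IsTruncatedSG

end TruncatedSemigroups

end Absorption

/-- For locally measurable `V : Ω → [0,∞]` (not assumed `T`-admissible),
`(T_V)_{−V}(t) = s-lim_{ε→0+} T_{εV}(t)` for every `t > 0`, where `(T_V)_{−V}(t)` denotes the
extension `J (T_V)_{−V}(t) P` to `L_p(μ)`. -/
theorem statement14
    {Ω : Type*} [MeasurableSpace Ω] (μ : Measure Ω) (p : ℝ≥0∞) [Fact (1 ≤ p)] (hp : p ≠ ∞)
    (T : ℝ → Lp ℝ p μ →L[ℝ] Lp ℝ p μ)
    (hT : IsC0Semigroup T) (hTpos : IsPositiveSG T)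
    (V : Ω → ℝ≥0∞) (hVmeas : LocallyMeasurable μ V)
    -- the one-parameter semigroup `T_V = s-lim_{n→∞} e^{t(A − V∧n)}`
    (S : ℕ → ℝ → Lp ℝ p μ →L[ℝ] Lp ℝ p μ)
    (hS : ∀ n : ℕ, IsPerturbedSG μ p T (S n) (trunc V n))
    (TV : ℝ → Lp ℝ p μ →L[ℝ] Lp ℝ p μ)
    (hTV : ∀ t : ℝ, 0 ≤ t → ∀ f : Lp ℝ p μ,
      Tendsto (fun n : ℕ => S n t f) atTop (𝓝 (TV t f)))
    -- the band projection `P = s-lim_{t→0+} T_V(t)`, with range the band `F` (`= L_p(μ₁)`)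
    (P : Lp ℝ p μ →L[ℝ] Lp ℝ p μ)
    (hP : ∀ f : Lp ℝ p μ, Tendsto (fun t : ℝ => TV t f) (𝓝[>] (0 : ℝ)) (𝓝 (P f)))
    (hPband : IsBandProjection P)
    (F : Submodule ℝ (Lp ℝ p μ)) (hF : (F : Set (Lp ℝ p μ)) = Set.range P)
    -- the restriction `T_V|_F`, a `C₀`-semigroup
    (TVr : ℝ → F →L[ℝ] F)
    (hTVr : ∀ t : ℝ, 0 ≤ t → ∀ f : F, ((TVr t f : F) : Lp ℝ p μ) = TV t (f : Lp ℝ p μ))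
    (hTVrC0 : IsC0Semigroup TVr)
    -- `(T_V)_{−V}`, the `C₀`-semigroup obtained from `T_V|_F` by the perturbation `−V`
    (U : ℕ → ℝ → F →L[ℝ] F)
    (hU : ∀ n : ℕ, IsPerturbedSGSub μ p F TVr (U n) (fun ω => -(trunc V n ω)))
    (LV : ℝ → F →L[ℝ] F)
    (hLV : ∀ t : ℝ, 0 ≤ t → ∀ f : F, Tendsto (fun n : ℕ => U n t f) atTop (𝓝 (LV t f)))
    (hLVC0 : IsC0Semigroup LV)
    -- the extension `J (T_V)_{−V}(t) P` of `(T_V)_{−V}(t)` to `L_p(μ)`, for `t > 0`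
    (Lext : ℝ → Lp ℝ p μ →L[ℝ] Lp ℝ p μ)
    (hLext₁ : ∀ t : ℝ, 0 < t → ∀ f : F, Lext t (f : Lp ℝ p μ) = ((LV t f : F) : Lp ℝ p μ))
    (hLext₂ : ∀ t : ℝ, 0 < t → ∀ f : Lp ℝ p μ, Lext t f = Lext t (P f))
    -- the absorption semigroups `T_{εV}` for `ε > 0`
    (Sε : ℝ → ℝ → Lp ℝ p μ →L[ℝ] Lp ℝ p μ)
    (hSε : ∀ ε : ℝ, 0 < ε → IsAbsorptionSG μ p T (smulRate ε V) (Sε ε)) :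
    -- `(T_V)_{−V}(t) = s-lim_{ε→0+} T_{εV}(t)` for every `t > 0`
    ∀ t : ℝ, 0 < t → ∀ f : Lp ℝ p μ,
      Tendsto (fun ε : ℝ => Sε ε t f) (𝓝[>] (0 : ℝ)) (𝓝 (Lext t f)) := by
  intro t ht
  obtain ⟨B, hSB⟩ := exists_isTruncatedSG hp hVmeas hS
  refine tendsto_apply_of_nonneg fun f hf => ?_
  have hPf : P f ∈ F := by
    rw [← SetLike.mem_coe, hF]
    exact Set.mem_range_self f
  have hdyson : ∀ n, Tendsto (fun k => dyson (S k) (B n) f t) atTop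
      (𝓝 (U n t ⟨P f, hPf⟩ : Lp ℝ p μ)) := fun n =>
    hSB.tendsto_dyson hT hTpos hTV hP hPband hF hTVrC0 hTVr (hU n) rfl ht
  have hlimit : Tendsto (fun n => (U n t ⟨P f, hPf⟩ : Lp ℝ p μ)) atTop (𝓝 (Lext t f)) := by
    rw [hLext₂ t ht f, hLext₁ t ht ⟨P f, hPf⟩]
    exact (continuous_subtype_val.tendsto _).comp (hLV t ht.le ⟨P f, hPf⟩)
  exact hSB.tendsto_absorptionSG (hSB.isPositiveSG hT hTpos) hp hVmeas hf ht.le hdyson hlimit hSε
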